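/- Fix θ ∈ Θ_M°. As |x| → ∞ the first-order parameter derivatives of the stable density satisfy: f_σ(x;θ) = O(|x|^{−(1+α)}), f_α(x;θ) = O(|x|^{−(1+α)} log|x|), f_β(x;θ) = O(|x|^{−(1+α)}), and their x-derivatives satisfy f_σ'(x;θ) = −f_{μσ}(x;θ) = O(|x|^{−(2+α)}), f_α'(x;θ) = −f_{μα}(x;θ) = O(|x|^{−(2+α)} log|x|), f_β'(x;θ) = −f_{μβ}(x;θ) = O(|x|^{−(2+α)}). -/

import Mathlib

open MeasureTheory Filter

noncomputable section

def ThetaInt : Set (Fin 4 → ℝ) :=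
  {θ | 0 < θ 1 ∧ θ 2 ∈ Set.Ioo (0:ℝ) 2 ∧ θ 3 ∈ Set.Ioo (-1:ℝ) 1}

/-- Cumulant (log characteristic function) of the continuous (M₀) parameterization,
with `θ = (μ, σ, α, β)`. -/
def psiM (θ : Fin 4 → ℝ) (t : ℝ) : ℂ :=
  if θ 2 = 1 then
    ((-(|θ 1 * t|) : ℝ) : ℂ)
      - Complex.I * (((2 * θ 3 / Real.pi) * (θ 1 * t) * Real.log |θ 1 * t| : ℝ) : ℂ)
      + Complex.I * ((θ 0 * t : ℝ) : ℂ)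
  else
    ((-(|θ 1 * t| ^ (θ 2)) : ℝ) : ℂ) *
        (1 + Complex.I * ((θ 3 * Real.sign t * Real.tan (Real.pi * θ 2 / 2)
            * (|θ 1 * t| ^ (1 - θ 2) - 1) : ℝ) : ℂ))
      + Complex.I * ((θ 0 * t : ℝ) : ℂ)

/-- Characteristic function of the (M₀) parameterization. -/
def phiM (θ : Fin 4 → ℝ) (t : ℝ) : ℂ := Complex.exp (psiM θ t)

/-- Stable density in the (M₀) parameterization, via Fourier inversion. -/
def fM (θ : Fin 4 → ℝ) (x : ℝ) : ℝ :=
  (1 / (2 * Real.pi)) *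
    (∫ t : ℝ, Complex.exp (-Complex.I * (t : ℂ) * (x : ℂ)) * phiM θ t).re

/-- Partial derivative of the density in parameter `i`. -/
def fP (i : Fin 4) (θ : Fin 4 → ℝ) (x : ℝ) : ℝ :=
  deriv (fun s => fM (Function.update θ i s) x) (θ i)

/-- Second partial derivative of the density in parameters `i`, `j`. -/
def fPP (i j : Fin 4) (θ : Fin 4 → ℝ) (x : ℝ) : ℝ :=
  deriv (fun s => fP i (Function.update θ j s) x) (θ j)

/-- Derivative of the density in `x`. -/
def fX (θ : Fin 4 → ℝ) (x : ℝ) : ℝ := deriv (fun y => fM θ y) x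

/-- Mixed derivative `∂²f/∂x∂θᵢ`. -/
def fPX (i : Fin 4) (θ : Fin 4 → ℝ) (x : ℝ) : ℝ := deriv (fun y => fP i θ y) x

/-- Score functions. -/
def ellP (i : Fin 4) (θ : Fin 4 → ℝ) (x : ℝ) : ℝ := fP i θ x / fM θ x

/-- Derivative of the score in `x`. -/
def ellPX (i : Fin 4) (θ : Fin 4 → ℝ) (x : ℝ) : ℝ := deriv (fun y => ellP i θ y) x

/-- Derivative of the score `ℓ_{θᵢ}` in the parameter `θⱼ`. -/
def ellPP (i j : Fin 4) (θ : Fin 4 → ℝ) (x : ℝ) : ℝ :=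
  deriv (fun s => ellP i (Function.update θ j s) x) (θ j)

/-- `h = O(r)` as `|x| → ∞`. -/
def IsBigOAtInfty (h r : ℝ → ℝ) : Prop :=
  ∃ c > 0, ∃ M > 0, ∀ x : ℝ, M ≤ |x| → |h x| ≤ c * r x


end

/-!
For `t > 0` the exponent is a boundary value, `psiM θ t = ψ(i t)`, of a function `ψ` analytic on the
slit plane; the kernels that make up `ψ` have a removable singularity at `α = 1`, so that this value
needs no separate treatment. Since `psiM θ (-t)` is conjugate to `psiM θ t`, the derivatives
`∂f/∂θᵢ` (`k = 0`) and `∂²f/∂μ∂θᵢ = -∂²f/∂x∂θᵢ` (`k = 1`) are the real part of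
`π⁻¹ ∫₀^∞ exp(-i x y) G(i y) dy` with `G(v) = exp(ψ(v)) vᵏ ∂ψ/∂θᵢ(v)`.

`G` decays in the half-strip `0 ≤ re v ≤ 1`, `im v ≥ 0`. Moving the contour from the imaginary axis
to the segment `[0, 1]` followed by the line `re v = 1` costs `O(exp(-x))` for the line, and the
real part of the segment only sees `im G`. On `(0, 1]` write `ψ = A + B` with `A` real and
`B = O(b^α)`. Then `im G(b) = O(b^(k+α) (1 + |log b|)ʲ)`, where `j = 1` precisely if `b^α` is
differentiated in `α` and `j = 0` otherwise, and Watson's lemma gives the right tail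
`x^(-(1+k+α)) (log x)ʲ`. The left tail is the right tail of the density with `(μ, β)` replaced by
`(-μ, -β)`.
-/

namespace StableDensity

open Complex (I)
open Topology Asymptotics

noncomputable section

section ExpQuot

/-- The entire function `(exp z - 1) / z`. -/
def expQuot : ℂ → ℂ := dslope Complex.exp 0

lemma differentiable_expQuot : Differentiable ℂ expQuot := by
  rw [← differentiableOn_univ]
  exact (Complex.differentiableOn_dslope univ_mem).2 Complex.differentiable_exp.differentiableOn

@[simp] lemma expQuot_zero : expQuot 0 = 1 := by simp [expQuot]

lemma mul_expQuot (z : ℂ) : z * expQuot z = Complex.exp z - 1 := by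
  simpa [expQuot] using sub_smul_dslope Complex.exp 0 z

lemma expQuot_add_mul_deriv (z : ℂ) :
    expQuot z + z * deriv expQuot z = Complex.exp z := by
  have hprod : HasDerivAt (fun w ↦ w * expQuot w) (1 * expQuot z + z * deriv expQuot z) z :=
    (hasDerivAt_id z).mul (differentiable_expQuot z).hasDerivAt
  simp only [mul_expQuot, one_mul] at hprod
  exact hprod.unique ((Complex.hasDerivAt_exp z).sub_const 1)

lemma norm_expQuot_le (z : ℂ) : ‖expQuot z‖ ≤ 1 + Real.exp z.re := by
  rcases eq_or_ne z 0 with rfl | hz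
  · simp
  have hexp_le : ∀ w ∈ segment ℝ 0 z, ‖Complex.exp w‖ ≤ 1 + Real.exp z.re := by
    intro w hw
    rw [segment_eq_image] at hw
    obtain ⟨t, ⟨ht0, ht1⟩, rfl⟩ := hw
    have hre : ((1 - t) • (0 : ℂ) + t • z).re ≤ max 0 z.re := by
      rcases le_total z.re 0 with h | h
      · simpa using Or.inl (mul_nonpos_of_nonneg_of_nonpos ht0 h)
      · simpa using Or.inr (mul_le_of_le_one_left h ht1)
    rw [Complex.norm_exp]
    calc Real.exp _ ≤ Real.exp (max 0 z.re) := Real.exp_le_exp.2 hre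
      _ = max 1 (Real.exp z.re) := by rw [Real.exp_monotone.map_max, Real.exp_zero]
      _ ≤ 1 + Real.exp z.re := max_le_add_of_nonneg zero_le_one (Real.exp_pos _).le
  have hlip : ‖Complex.exp z - Complex.exp 0‖ ≤ (1 + Real.exp z.re) * ‖z - 0‖ :=
    (convex_segment (0 : ℂ) z).norm_image_sub_le_of_norm_hasDerivWithin_le
      (fun w _ ↦ (Complex.hasDerivAt_exp w).hasDerivWithinAt) hexp_le
      (left_mem_segment ℝ _ _) (right_mem_segment ℝ _ _)
  rw [Complex.exp_zero, ← mul_expQuot, norm_mul, sub_zero, mul_comm] at hlip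
  exact le_of_mul_le_mul_right hlip (norm_pos_iff.2 hz)

lemma norm_deriv_expQuot_le (z : ℂ) : ‖deriv expQuot z‖ ≤ 3 * (1 + Real.exp z.re) := by
  have hsphere : ∀ w ∈ Metric.sphere z 1, ‖expQuot w‖ ≤ 3 * (1 + Real.exp z.re) := by
    intro w hw
    have hre : w.re ≤ z.re + 1 := by
      have := (Complex.re_le_norm (w - z)).trans_eq (mem_sphere_iff_norm.1 hw)
      rw [Complex.sub_re] at this
      linarith
    calc ‖expQuot w‖ ≤ 1 + Real.exp w.re := norm_expQuot_le w
      _ ≤ 1 + Real.exp z.re * Real.exp 1 := by rw [← Real.exp_add]; gcongr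
      _ ≤ 1 + Real.exp z.re * 3 := by gcongr; exact Real.exp_one_lt_three.le
      _ ≤ 3 * (1 + Real.exp z.re) := by linarith
  simpa using Complex.norm_deriv_le_of_forall_mem_sphere_norm_le one_pos
    differentiable_expQuot.diffContOnCl hsphere

lemma expQuot_ofReal (x : ℝ) : expQuot x = (expQuot x).re := by
  rcases eq_or_ne x 0 with rfl | hx
  · simp
  have hx' : (x : ℂ) ≠ 0 := Complex.ofReal_ne_zero.2 hx
  have hquot : expQuot x = ((Real.exp x - 1) / x : ℝ) := by
    rw [Complex.ofReal_div, eq_div_iff hx', mul_comm, mul_expQuot]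
    push_cast
    rfl
  rw [hquot, Complex.ofReal_re]

lemma sinc_eq_re_expQuot (x : ℝ) : Real.sinc x = (expQuot (x * I)).re := by
  rcases eq_or_ne x 0 with rfl | hx
  · simp
  have him : x * (expQuot (x * I)).re = Real.sin x := by
    simpa [Complex.exp_ofReal_mul_I_im] using congrArg Complex.im (mul_expQuot (x * I))
  rw [Real.sinc_of_ne_zero hx, div_eq_iff hx, ← him, mul_comm]

lemma contDiff_sinc {n : WithTop ℕ∞} : ContDiff ℝ n Real.sinc := by
  rw [show Real.sinc = fun x : ℝ ↦ (expQuot (x * I)).re from funext sinc_eq_re_expQuot]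
  have harg : ContDiff ℝ n fun x : ℝ ↦ (x : ℂ) * I :=
    Complex.ofRealCLM.contDiff.mul contDiff_const
  exact Complex.reCLM.contDiff.comp
    ((differentiable_expQuot.contDiff.restrict_scalars ℝ).comp harg)

end ExpQuot

section Trigonometric

/-- The function `ε / sin (π ε / 2)`, extended by its limit `2 / π` at `ε = 0`. -/
def cscQuot (ε : ℝ) : ℝ := 2 / Real.pi / Real.sinc (Real.pi * ε / 2)

/-- The function `(1 - cos (π ε / 2)) / sin (π ε / 2)`, extended by its limit `0` at `ε = 0`. -/
def tanHalf (ε : ℝ) : ℝ := Real.tan (Real.pi * ε / 4)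

lemma sin_half_pi_mul_ne_zero {ε : ℝ} (hε : ε ∈ Set.Ioo (-1 : ℝ) 1) (h0 : ε ≠ 0) :
    Real.sin (Real.pi * ε / 2) ≠ 0 := by
  have hπ := Real.pi_pos
  refine mt (Real.sin_eq_zero_iff_of_lt_of_lt ?_ ?_).1 (by positivity) <;>
    nlinarith [hε.1, hε.2]

lemma cos_quarter_pi_mul_pos {ε : ℝ} (hε : ε ∈ Set.Ioo (-1 : ℝ) 1) :
    0 < Real.cos (Real.pi * ε / 4) := by
  have hπ := Real.pi_pos
  exact Real.cos_pos_of_mem_Ioo ⟨by nlinarith [hε.1], by nlinarith [hε.2]⟩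

lemma sinc_half_pi_mul_ne_zero {ε : ℝ} (hε : ε ∈ Set.Ioo (-1 : ℝ) 1) :
    Real.sinc (Real.pi * ε / 2) ≠ 0 := by
  rcases eq_or_ne ε 0 with rfl | h0
  · simp
  have hne : Real.pi * ε / 2 ≠ 0 := by positivity
  rw [Real.sinc_of_ne_zero hne]
  exact div_ne_zero (sin_half_pi_mul_ne_zero hε h0) hne

@[simp] lemma cscQuot_zero : cscQuot 0 = 2 / Real.pi := by simp [cscQuot]

@[simp] lemma tanHalf_zero : tanHalf 0 = 0 := by simp [tanHalf]

lemma cscQuot_of_ne_zero {ε : ℝ} (h0 : ε ≠ 0) : cscQuot ε = ε / Real.sin (Real.pi * ε / 2) := by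
  have hπ := Real.pi_ne_zero
  rw [cscQuot, Real.sinc_of_ne_zero (by positivity)]
  field_simp

lemma tanHalf_eq {ε : ℝ} (hε : ε ∈ Set.Ioo (-1 : ℝ) 1) (h0 : ε ≠ 0) :
    tanHalf ε = (1 - Real.cos (Real.pi * ε / 2)) / Real.sin (Real.pi * ε / 2) := by
  have hcos := (cos_quarter_pi_mul_pos hε).ne'
  have hsin := sin_half_pi_mul_ne_zero hε h0
  have hdouble : Real.pi * ε / 2 = 2 * (Real.pi * ε / 4) := by ring
  rw [hdouble, Real.sin_two_mul] at hsin
  rw [tanHalf, Real.tan_eq_sin_div_cos, hdouble, Real.sin_two_mul, Real.cos_two_mul,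
    div_eq_div_iff hcos hsin]
  linear_combination (2 * Real.cos (Real.pi * ε / 4)) *
    Real.sin_sq_add_cos_sq (Real.pi * ε / 4)

lemma contDiffAt_cscQuot {n : WithTop ℕ∞} {ε : ℝ} (hε : ε ∈ Set.Ioo (-1 : ℝ) 1) :
    ContDiffAt ℝ n cscQuot ε := by
  have hsinc : ContDiff ℝ n fun x : ℝ ↦ Real.sinc (Real.pi * x / 2) :=
    contDiff_sinc.comp (by fun_prop)
  exact contDiffAt_const.div hsinc.contDiffAt (sinc_half_pi_mul_ne_zero hε)

lemma contDiffAt_tanHalf {n : WithTop ℕ∞} {ε : ℝ} (hε : ε ∈ Set.Ioo (-1 : ℝ) 1) :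
    ContDiffAt ℝ n tanHalf ε :=
  (Real.contDiffAt_tan.2 (cos_quarter_pi_mul_pos hε).ne').comp ε
    (f := fun x ↦ Real.pi * x / 4) (by fun_prop)

end Trigonometric

section Kernels

/-- The kernel `(exp (ε L) - cos (π ε / 2)) / sin (π ε / 2)`, made smooth across `ε = 0`; it is the
part of the exponent that is real for real `L`. -/
def skewKernel (ε : ℝ) (L : ℂ) : ℂ := cscQuot ε * (L * expQuot (ε * L)) + tanHalf ε

/-- The derivative of `skewKernel` in its first argument. -/
def skewKernelDeriv (ε : ℝ) (L : ℂ) : ℂ :=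
  deriv cscQuot ε * (L * expQuot (ε * L)) + cscQuot ε * (L ^ 2 * deriv expQuot (ε * L)) +
    deriv tanHalf ε

/-- The kernel `i · exp (ε (L - i π / 2))` of the part of the exponent that is not real for
real `L`. -/
def powKernel (ε : ℝ) (L : ℂ) : ℂ := I * Complex.exp (ε * (L - Real.pi / 2 * I))

lemma hasDerivAt_skewKernel_right (ε : ℝ) (L : ℂ) :
    HasDerivAt (skewKernel ε) (cscQuot ε * Complex.exp (ε * L)) L := by
  have hE : HasDerivAt (fun z : ℂ ↦ expQuot (ε * z)) _ L :=
    (differentiable_expQuot _).hasDerivAt.comp L ((hasDerivAt_id L).const_mul (ε : ℂ))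
  refine ((((hasDerivAt_id L).mul hE).const_mul (cscQuot ε : ℂ)).add_const
    (tanHalf ε : ℂ)).congr_deriv ?_
  rw [← expQuot_add_mul_deriv, id]
  ring

lemma hasDerivAt_skewKernel_left {ε : ℝ} (hε : ε ∈ Set.Ioo (-1 : ℝ) 1) (L : ℂ) :
    HasDerivAt (fun e ↦ skewKernel e L) (skewKernelDeriv ε L) ε := by
  have hE : HasDerivAt (fun e : ℝ ↦ expQuot (e * L)) _ ε :=
    (differentiable_expQuot _).hasDerivAt.comp ε ((hasDerivAt_id ε).ofReal_comp.mul_const L)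
  have hcsc := ((contDiffAt_cscQuot hε).differentiableAt one_ne_zero).hasDerivAt.ofReal_comp
  have htan := ((contDiffAt_tanHalf hε).differentiableAt one_ne_zero).hasDerivAt.ofReal_comp
  refine ((hcsc.mul (hE.const_mul L)).add htan).congr_deriv ?_
  simp only [skewKernelDeriv, Complex.ofReal_one]
  ring

lemma hasDerivAt_powKernel_right (ε : ℝ) (L : ℂ) :
    HasDerivAt (powKernel ε) (ε * powKernel ε L) L := by
  refine ((((hasDerivAt_id L).sub_const _).const_mul (ε : ℂ)).cexp.const_mul I).congr_deriv ?_
  simp only [powKernel, id]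
  ring

lemma hasDerivAt_powKernel_left (ε : ℝ) (L : ℂ) :
    HasDerivAt (fun e ↦ powKernel e L) ((L - Real.pi / 2 * I) * powKernel ε L) ε := by
  refine (((hasDerivAt_id ε).ofReal_comp.mul_const
    (L - Real.pi / 2 * I)).cexp.const_mul I).congr_deriv ?_
  simp only [powKernel, id, Complex.ofReal_one]
  ring

lemma skewKernel_ofReal (ε x : ℝ) : ∃ y : ℝ, skewKernel ε x = y := by
  have harg : (ε : ℂ) * x = ((ε * x : ℝ) : ℂ) := by push_cast; rfl
  refine ⟨cscQuot ε * (x * (expQuot (ε * x : ℝ)).re) + tanHalf ε, ?_⟩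
  rw [skewKernel, harg, expQuot_ofReal]
  push_cast
  rfl

lemma norm_powKernel (ε : ℝ) (L : ℂ) : ‖powKernel ε L‖ = Real.exp (ε * L.re) := by
  simp [powKernel, Complex.norm_exp]

end Kernels

section Exponent

/-- `log (σ v)` for `σ > 0`. -/
def logScaled (σ : ℝ) (v : ℂ) : ℂ := Real.log σ + Complex.log v

/-- The part of the continued exponent that is real on `(0, ∞)`. -/
def realExponent (θ : Fin 4 → ℝ) (v : ℂ) : ℂ :=
  θ 0 * v - θ 3 * (θ 1 * v) * skewKernel (θ 2 - 1) (logScaled (θ 1) v)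

/-- The multiple of `(σ v) ^ α` in the continued exponent. -/
def branchExponent (θ : Fin 4 → ℝ) (v : ℂ) : ℂ :=
  (1 + θ 3) * (θ 1 * v) * powKernel (θ 2 - 1) (logScaled (θ 1) v)

/-- The analytic continuation of the exponent: `psiExt θ (i t) = psiM θ t` for `t > 0`. -/
def psiExt (θ : Fin 4 → ℝ) (v : ℂ) : ℂ := realExponent θ v + branchExponent θ v

/-- The partial derivative of `realExponent` in the `i`-th parameter. -/
def realExponentDeriv (i : Fin 4) (θ : Fin 4 → ℝ) (v : ℂ) : ℂ :=
  let ε := θ 2 - 1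
  let L := logScaled (θ 1) v
  ![v, -(θ 3 * v * (skewKernel ε L + cscQuot ε * Complex.exp (ε * L))),
    -(θ 3 * (θ 1 * v) * skewKernelDeriv ε L), -(θ 1 * v * skewKernel ε L)] i

/-- The partial derivative of `branchExponent` in the `i`-th parameter. -/
def branchExponentDeriv (i : Fin 4) (θ : Fin 4 → ℝ) (v : ℂ) : ℂ :=
  let ε := θ 2 - 1
  let L := logScaled (θ 1) v
  ![0, (1 + θ 3) * v * (θ 2 * powKernel ε L),
    (1 + θ 3) * (θ 1 * v) * ((L - Real.pi / 2 * I) * powKernel ε L), θ 1 * v * powKernel ε L] i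

/-- The partial derivative of `psiExt` in the `i`-th parameter. -/
def psiExtDeriv (i : Fin 4) (θ : Fin 4 → ℝ) (v : ℂ) : ℂ :=
  realExponentDeriv i θ v + branchExponentDeriv i θ v

/-- The parameters `θ = (μ, σ, α, β)` with `σ > 0` and `0 < α < 2`. -/
def stableDomain : Set (Fin 4 → ℝ) := {θ | 0 < θ 1 ∧ θ 2 ∈ Set.Ioo (0 : ℝ) 2}

variable {θ : Fin 4 → ℝ}

lemma isOpen_stableDomain : IsOpen stableDomain :=
  (isOpen_Ioi.preimage (continuous_apply 1)).inter (isOpen_Ioo.preimage (continuous_apply 2))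

lemma sub_one_mem_Ioo_of_mem_stableDomain (hθ : θ ∈ stableDomain) :
    θ 2 - 1 ∈ Set.Ioo (-1 : ℝ) 1 :=
  ⟨by linarith [hθ.2.1], by linarith [hθ.2.2]⟩

lemma hasDerivAt_logScaled_left {σ : ℝ} (hσ : σ ≠ 0) (v : ℂ) :
    HasDerivAt (fun s ↦ logScaled s v) ((σ⁻¹ : ℝ) : ℂ) σ :=
  (Real.hasDerivAt_log hσ).ofReal_comp.add_const (Complex.log v)

lemma hasDerivAt_logScaled_right (σ : ℝ) {v : ℂ} (hv : v ∈ Complex.slitPlane) :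
    HasDerivAt (logScaled σ) v⁻¹ v :=
  (Complex.hasDerivAt_log hv).const_add _

lemma logScaled_ofReal (σ : ℝ) {b : ℝ} (hb : 0 < b) :
    logScaled σ b = ((Real.log σ + Real.log b : ℝ) : ℂ) := by
  rw [logScaled, ← Complex.ofReal_log hb.le]
  push_cast
  rfl

lemma logScaled_mul_I {σ t : ℝ} (hσ : 0 < σ) (ht : 0 < t) :
    logScaled σ (t * I) = (Real.log (σ * t) : ℂ) + Real.pi / 2 * I := by
  rw [logScaled, Complex.log_ofReal_mul ht Complex.I_ne_zero, Complex.log_I,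
    Real.log_mul hσ.ne' ht.ne']
  push_cast
  ring

lemma hasDerivAt_realExponent (i : Fin 4) (hθ : θ ∈ stableDomain) (v : ℂ) :
    HasDerivAt (fun s ↦ realExponent (Function.update θ i s) v) (realExponentDeriv i θ v)
      (θ i) := by
  have hid : HasDerivAt (fun s : ℝ ↦ (s : ℂ)) 1 (θ i) := (hasDerivAt_id (θ i)).ofReal_comp
  fin_cases i
  · refine HasDerivAt.congr_deriv (f' := 1 * v) ?_ (by simp [realExponentDeriv])
    simpa [realExponent] using (hid.mul_const v).sub_const
      (θ 3 * (θ 1 * v) * skewKernel (θ 2 - 1) (logScaled (θ 1) v))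
  · have hσ : (θ 1 : ℂ) ≠ 0 := Complex.ofReal_ne_zero.2 hθ.1.ne'
    have hK := (hasDerivAt_skewKernel_right (θ 2 - 1) (logScaled (θ 1) v)).comp (θ 1)
      (hasDerivAt_logScaled_left hθ.1.ne' v)
    refine HasDerivAt.congr_deriv (f := fun s ↦ realExponent (Function.update θ 1 s) v)
      ((((hid.mul_const v).const_mul (θ 3 : ℂ)).mul hK).const_sub (θ 0 * v)) ?_
    simp only [realExponentDeriv, Fin.mk_one, Function.comp_apply, Matrix.cons_val_one,
      Matrix.cons_val_zero]
    push_cast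
    field_simp
  · have hK := (hasDerivAt_skewKernel_left (sub_one_mem_Ioo_of_mem_stableDomain hθ)
      (logScaled (θ 1) v)).comp_sub_const (θ 2) 1
    refine HasDerivAt.congr_deriv (f := fun s ↦ realExponent (Function.update θ 2 s) v)
      ((hK.const_mul (θ 3 * (θ 1 * v))).const_sub (θ 0 * v)) ?_
    simp [realExponentDeriv]
  · refine HasDerivAt.congr_deriv (f := fun s ↦ realExponent (Function.update θ 3 s) v)
      (((hid.mul_const (θ 1 * v)).mul_const
        (skewKernel (θ 2 - 1) (logScaled (θ 1) v))).const_sub (θ 0 * v)) ?_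
    simp [realExponentDeriv]

lemma hasDerivAt_branchExponent (i : Fin 4) (hσ : 0 < θ 1) (v : ℂ) :
    HasDerivAt (fun s ↦ branchExponent (Function.update θ i s) v) (branchExponentDeriv i θ v)
      (θ i) := by
  have hid : HasDerivAt (fun s : ℝ ↦ (s : ℂ)) 1 (θ i) := (hasDerivAt_id (θ i)).ofReal_comp
  fin_cases i
  · simpa [branchExponent, branchExponentDeriv] using hasDerivAt_const (θ 0) (branchExponent θ v)
  · have hσ' : (θ 1 : ℂ) ≠ 0 := Complex.ofReal_ne_zero.2 hσ.ne'
    have hQ := (hasDerivAt_powKernel_right (θ 2 - 1) (logScaled (θ 1) v)).comp (θ 1)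
      (hasDerivAt_logScaled_left hσ.ne' v)
    refine HasDerivAt.congr_deriv (f := fun s ↦ branchExponent (Function.update θ 1 s) v)
      (((hid.mul_const v).const_mul (1 + θ 3 : ℂ)).mul hQ) ?_
    simp only [branchExponentDeriv, Fin.mk_one, Fin.reduceEq, ne_eq, not_false_eq_true,
      Function.update_of_ne, Function.update_self, Matrix.cons_val_one,
      Matrix.cons_val_zero]
    push_cast
    field_simp
    ring
  · have hQ := (hasDerivAt_powKernel_left (θ 2 - 1) (logScaled (θ 1) v)).comp_sub_const (θ 2) 1
    refine HasDerivAt.congr_deriv (f := fun s ↦ branchExponent (Function.update θ 2 s) v)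
      (hQ.const_mul ((1 + θ 3) * (θ 1 * v))) ?_
    simp [branchExponentDeriv]
  · refine HasDerivAt.congr_deriv (f := fun s ↦ branchExponent (Function.update θ 3 s) v)
      (((hid.const_add 1).mul_const (θ 1 * v)).mul_const
        (powKernel (θ 2 - 1) (logScaled (θ 1) v))) ?_
    simp [branchExponentDeriv]

lemma hasDerivAt_psiExt_param (i : Fin 4) (hθ : θ ∈ stableDomain) (v : ℂ) :
    HasDerivAt (fun s ↦ psiExt (Function.update θ i s) v) (psiExtDeriv i θ v) (θ i) :=
  (hasDerivAt_realExponent i hθ v).add (hasDerivAt_branchExponent i hθ.1 v)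

lemma hasDerivAt_psiExt (θ : Fin 4 → ℝ) {v : ℂ} (hv : v ∈ Complex.slitPlane) :
    HasDerivAt (psiExt θ) (θ 0 + θ 1 * psiExtDeriv 1 θ v / v) v := by
  have hv0 : v ≠ 0 := Complex.slitPlane_ne_zero hv
  have hL := hasDerivAt_logScaled_right (θ 1) hv
  have hσv := (hasDerivAt_id v).const_mul (θ 1 : ℂ)
  have hK := (hasDerivAt_skewKernel_right (θ 2 - 1) _).comp v hL
  have hQ := (hasDerivAt_powKernel_right (θ 2 - 1) _).comp v hL
  refine ((((hasDerivAt_id v).const_mul (θ 0 : ℂ)).sub ((hσv.const_mul (θ 3 : ℂ)).mul hK)).add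
    ((hσv.const_mul (1 + θ 3 : ℂ)).mul hQ)).congr_deriv ?_
  simp only [psiExtDeriv, realExponentDeriv, branchExponentDeriv, id, Function.comp_apply,
    Matrix.cons_val_one, Matrix.cons_val_zero]
  push_cast
  field_simp
  ring

end Exponent

section ImaginaryAxis

variable {θ : Fin 4 → ℝ}

lemma mul_exp_sub_one_mul_log {u : ℝ} (hu : 0 < u) (α : ℝ) :
    u * Real.exp ((α - 1) * Real.log u) = u ^ α := by
  rw [mul_comm (α - 1), ← Real.rpow_def_of_pos hu, Real.rpow_sub_one hu.ne']
  field_simp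

lemma branchExponent_mul_I (θ : Fin 4 → ℝ) (hσ : 0 < θ 1) {t : ℝ} (ht : 0 < t) :
    branchExponent θ (t * I) = -(1 + θ 3) * ((θ 1 * t) ^ θ 2 : ℝ) := by
  rw [branchExponent, powKernel, logScaled_mul_I hσ ht, add_sub_cancel_right,
    ← mul_exp_sub_one_mul_log (mul_pos hσ ht)]
  push_cast
  linear_combination (1 + θ 3 : ℂ) * (θ 1 * t *
    Complex.exp ((θ 2 - 1) * (Real.log (θ 1 * t) : ℝ))) * Complex.I_sq

lemma sin_mul_skewKernel_add_I {ε : ℝ} (hε : ε ∈ Set.Ioo (-1 : ℝ) 1) (h0 : ε ≠ 0) (x : ℝ) :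
    Real.sin (Real.pi * ε / 2) * skewKernel ε (x + Real.pi / 2 * I) =
      Real.exp (ε * x) * (Real.cos (Real.pi * ε / 2) + Real.sin (Real.pi * ε / 2) * I) -
        Real.cos (Real.pi * ε / 2) := by
  have hs : (Real.sin (Real.pi * ε / 2) : ℂ) ≠ 0 :=
    Complex.ofReal_ne_zero.2 (sin_half_pi_mul_ne_zero hε h0)
  have hexp : Complex.exp (ε * (x + Real.pi / 2 * I)) =
      Real.exp (ε * x) * (Real.cos (Real.pi * ε / 2) + Real.sin (Real.pi * ε / 2) * I) := by
    rw [Complex.ofReal_exp, Complex.ofReal_cos, Complex.ofReal_sin, ← Complex.exp_mul_I,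
      ← Complex.exp_add]
    congr 1
    push_cast
    ring
  have hquot := mul_expQuot (ε * (x + Real.pi / 2 * I))
  rw [hexp] at hquot
  rw [skewKernel, cscQuot_of_ne_zero h0, tanHalf_eq hε h0, Complex.ofReal_div, Complex.ofReal_div,
    mul_add, ← mul_assoc, mul_div_cancel₀ _ hs, mul_div_cancel₀ _ hs, Complex.ofReal_sub,
    Complex.ofReal_one]
  linear_combination hquot

lemma sin_mul_tan_half_pi_mul {α : ℝ} (hs : Real.sin (Real.pi * (α - 1) / 2) ≠ 0) :
    Real.sin (Real.pi * (α - 1) / 2) * Real.tan (Real.pi * α / 2) =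
      -Real.cos (Real.pi * (α - 1) / 2) := by
  rw [show Real.pi * α / 2 = Real.pi * (α - 1) / 2 + Real.pi / 2 by ring,
    Real.tan_eq_sin_div_cos, Real.sin_add_pi_div_two, Real.cos_add_pi_div_two, div_neg,
    mul_neg, mul_div_cancel₀ _ hs]

lemma psiM_eq_psiExt (hθ : θ ∈ stableDomain) {t : ℝ} (ht : 0 < t) :
    psiM θ t = psiExt θ (t * I) := by
  have hu : 0 < θ 1 * t := mul_pos hθ.1 ht
  rw [psiExt, branchExponent_mul_I θ hθ.1 ht, realExponent, logScaled_mul_I hθ.1 ht, psiM,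
    abs_of_pos hu]
  split_ifs with hα
  · simp only [hα, sub_self, skewKernel, cscQuot_zero, tanHalf_zero, Complex.ofReal_zero, zero_mul,
      expQuot_zero, Real.rpow_one]
    have hπ : (Real.pi : ℂ) ≠ 0 := Complex.ofReal_ne_zero.2 Real.pi_ne_zero
    push_cast
    field_simp
    linear_combination (θ 3 * θ 1 * t * Real.pi : ℂ) * Complex.I_sq
  · have h0 : θ 2 - 1 ≠ 0 := sub_ne_zero.2 hα
    have hε := sub_one_mem_Ioo_of_mem_stableDomain hθ
    have hs := sin_half_pi_mul_ne_zero hε h0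
    have hinv : (θ 1 * t) ^ θ 2 * (θ 1 * t) ^ (1 - θ 2) = θ 1 * t := by
      rw [← Real.rpow_add hu, add_sub_cancel, Real.rpow_one]
    have htan' := congrArg Complex.ofReal (sin_mul_tan_half_pi_mul hs)
    have hinv' := congrArg Complex.ofReal hinv
    have hpow := congrArg Complex.ofReal (mul_exp_sub_one_mul_log hu (θ 2))
    have hskew := sin_mul_skewKernel_add_I hε h0 (Real.log (θ 1 * t))
    refine mul_left_cancel₀ (Complex.ofReal_ne_zero.2 hs) ?_
    rw [Real.sign_of_pos ht]
    generalize skewKernel (θ 2 - 1) (Real.log (θ 1 * t) + Real.pi / 2 * I) = K at *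
    generalize Real.exp ((θ 2 - 1) * Real.log (θ 1 * t)) = X at *
    generalize Real.cos (Real.pi * (θ 2 - 1) / 2) = c at *
    generalize Real.sin (Real.pi * (θ 2 - 1) / 2) = s at *
    generalize Real.tan (Real.pi * θ 2 / 2) = T at *
    generalize (θ 1 * t) ^ θ 2 = p at *
    generalize (θ 1 * t) ^ (1 - θ 2) = q at *
    push_cast at htan' hinv' hpow ⊢
    linear_combination (-I * θ 3 * p * (q - 1)) * htan' + (θ 3 * θ 1 * t * I) * hskew +
      (I * θ 3 * c) * hinv' + (θ 3 * I * (c + s * I)) * hpow + (θ 3 * s * p) * Complex.I_sq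

lemma re_psiM (θ : Fin 4 → ℝ) (t : ℝ) : (psiM θ t).re = -|θ 1 * t| ^ θ 2 := by
  rw [psiM]
  split_ifs with hα
  · simp [hα]
  · simp only [Complex.add_re, Complex.re_ofReal_mul, Complex.I_mul_re, Complex.ofReal_im,
      Complex.one_re, neg_zero, add_zero, mul_one]

lemma re_psiExt_mul_I (hθ : θ ∈ stableDomain) {t : ℝ} (ht : 0 < t) :
    (psiExt θ (t * I)).re = -(θ 1 * t) ^ θ 2 := by
  rw [← psiM_eq_psiExt hθ ht, re_psiM, abs_of_pos (mul_pos hθ.1 ht)]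

lemma psiM_neg (θ : Fin 4 → ℝ) (t : ℝ) : psiM θ (-t) = (starRingEnd ℂ) (psiM θ t) := by
  have hsign : Real.sign (-t) = -Real.sign t := Real.sign_neg
  simp only [psiM, mul_neg, abs_neg, hsign]
  split_ifs <;>
    simp only [map_add, map_sub, map_mul, map_one, Complex.conj_I, Complex.conj_ofReal] <;>
    push_cast <;> ring

end ImaginaryAxis

section RealPowers

lemma exists_one_add_pow_le_exp (n : ℕ) {η : ℝ} (hη : 0 < η) :
    ∃ C > 0, ∀ t : ℝ, 0 ≤ t → (1 + t) ^ n ≤ C * Real.exp (η * t) := by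
  refine ⟨n.factorial / η ^ n * Real.exp η, by positivity, fun t ht ↦ ?_⟩
  have h := Real.pow_div_factorial_le_exp (η * (1 + t)) (by positivity) n
  rw [div_le_iff₀ (by positivity), mul_pow, mul_one_add η, Real.exp_add] at h
  calc (1 + t) ^ n = η ^ n * (1 + t) ^ n / η ^ n := by field_simp
    _ ≤ Real.exp η * Real.exp (η * t) * n.factorial / η ^ n := by gcongr
    _ = _ := by ring

lemma exists_one_add_abs_log_pow_le (n : ℕ) {η : ℝ} (hη : 0 < η) :
    ∃ C > 0, ∀ u : ℝ, 0 < u → (1 + |Real.log u|) ^ n ≤ C * (u ^ η + u ^ (-η)) := by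
  obtain ⟨C, hC, hpow⟩ := exists_one_add_pow_le_exp n hη
  refine ⟨C, hC, fun u hu ↦ (hpow _ (abs_nonneg _)).trans ?_⟩
  have habs : Real.exp (η * |Real.log u|) ≤ u ^ η + u ^ (-η) := by
    rw [Real.rpow_def_of_pos hu, Real.rpow_def_of_pos hu]
    rcases abs_cases (Real.log u) with ⟨h, -⟩ | ⟨h, -⟩ <;> rw [h]
    · rw [mul_comm]
      exact le_add_of_nonneg_right (Real.exp_pos _).le
    · rw [mul_neg, ← neg_mul, mul_comm]
      exact le_add_of_nonneg_left (Real.exp_pos _).le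
  gcongr

lemma rpow_le_rpow_add_rpow {u r a s : ℝ} (hu : 0 < u) (hra : r ≤ a) (has : a ≤ s) :
    u ^ a ≤ u ^ r + u ^ s := by
  rcases le_total u 1 with h | h
  · exact (Real.rpow_le_rpow_of_exponent_ge hu h hra).trans
      (le_add_of_nonneg_right (Real.rpow_nonneg hu.le _))
  · exact (Real.rpow_le_rpow_of_exponent_le h has).trans
      (le_add_of_nonneg_left (Real.rpow_nonneg hu.le _))

lemma exists_one_add_abs_log_pow_mul_rpow_le (n : ℕ) {r s η : ℝ} (hη : 0 < η) :
    ∃ C > 0, ∀ u : ℝ, 0 < u → ∀ a ∈ Set.Icc (r + η) (s - η),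
      (1 + |Real.log u|) ^ n * u ^ a ≤ C * (u ^ r + u ^ s) := by
  obtain ⟨C, hC, hlog⟩ := exists_one_add_abs_log_pow_le n hη
  refine ⟨C * 2, by positivity, fun u hu a ha ↦ ?_⟩
  calc (1 + |Real.log u|) ^ n * u ^ a ≤ C * (u ^ η + u ^ (-η)) * u ^ a := by
        gcongr
        exact hlog u hu
    _ = C * (u ^ (a + η) + u ^ (a - η)) := by
        rw [Real.rpow_add hu, sub_eq_add_neg, Real.rpow_add hu]
        ring
    _ ≤ C * ((u ^ r + u ^ s) + (u ^ r + u ^ s)) := by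
        gcongr <;> apply rpow_le_rpow_add_rpow hu <;> linarith [ha.1, ha.2]
    _ = _ := by ring

end RealPowers

section LocallyUniformBounds

variable {X Y E F : Type*} [TopologicalSpace X] [SeminormedAddCommGroup E]
  [SeminormedAddCommGroup F]

lemma isBigO_mul_of_continuousAt {f : X → ℂ} {x₀ : X} (hf : ContinuousAt f x₀)
    {g : X × Y → ℂ} {m : X × Y → ℝ} (hg : g =O[𝓝 x₀ ×ˢ ⊤] m) :
    (fun p ↦ f p.1 * g p) =O[𝓝 x₀ ×ˢ ⊤] m := by
  have hbdd : (fun p : X × Y ↦ f p.1) =O[𝓝 x₀ ×ˢ ⊤] fun _ ↦ (1 : ℝ) :=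
    (hf.isBigO_one ℝ).comp_tendsto tendsto_fst
  simpa only [one_mul] using hbdd.mul hg

lemma exists_eventually_forall_norm_le {x₀ : X} {f : X × Y → E} {g : X × Y → F}
    (h : f =O[𝓝 x₀ ×ˢ ⊤] g) :
    ∃ C > 0, ∀ᶠ x in 𝓝 x₀, ∀ y, ‖f (x, y)‖ ≤ C * ‖g (x, y)‖ := by
  obtain ⟨C, hC, hbound⟩ := h.exists_pos
  refine ⟨C, hC, ?_⟩
  rw [← principal_univ, IsBigOWith_def, eventually_prod_principal_iff] at hbound
  simpa using hbound

lemma exists_forall_norm_le {x₀ : X} {f : X × Y → E} {g : X × Y → F}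
    (h : f =O[𝓝 x₀ ×ˢ ⊤] g) : ∃ C > 0, ∀ y, ‖f (x₀, y)‖ ≤ C * ‖g (x₀, y)‖ :=
  let ⟨C, hC, hbound⟩ := exists_eventually_forall_norm_le h
  ⟨C, hC, hbound.self_of_nhds⟩

end LocallyUniformBounds

section KernelGrowth

/-- The common majorant of the kernels and their derivatives, up to a factor locally bounded
in `ε`. -/
def kernelMajorant (ε : ℝ) (L : ℂ) : ℝ := (1 + ‖L‖) ^ 2 * (1 + Real.exp (ε * L.re))

lemma one_le_kernelMajorant (ε : ℝ) (L : ℂ) : 1 ≤ kernelMajorant ε L :=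
  one_le_mul_of_one_le_of_one_le (one_le_pow₀ (by linarith [norm_nonneg L]))
    (by linarith [Real.exp_pos (ε * L.re)])

lemma norm_pow_mul_le_kernelMajorant {k : ℕ} (hk : k ≤ 2) (ε : ℝ) (L : ℂ) :
    ‖L‖ ^ k * (1 + Real.exp (ε * L.re)) ≤ kernelMajorant ε L := by
  have hL := norm_nonneg L
  have hpow : ‖L‖ ^ k ≤ (1 + ‖L‖) ^ 2 :=
    (pow_le_pow_left₀ hL (by linarith) k).trans (pow_le_pow_right₀ (by linarith) hk)
  exact mul_le_mul_of_nonneg_right hpow (by positivity)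

lemma norm_mul_expQuot_le (ε : ℝ) (L : ℂ) : ‖L * expQuot (ε * L)‖ ≤ kernelMajorant ε L := by
  have hE := norm_expQuot_le (ε * L)
  rw [Complex.re_ofReal_mul] at hE
  calc ‖L * expQuot (ε * L)‖ ≤ ‖L‖ ^ 1 * (1 + Real.exp (ε * L.re)) := by
        rw [norm_mul, pow_one]; gcongr
    _ ≤ _ := norm_pow_mul_le_kernelMajorant one_le_two ε L

lemma norm_sq_mul_deriv_expQuot_le (ε : ℝ) (L : ℂ) :
    ‖L ^ 2 * deriv expQuot (ε * L)‖ ≤ 3 * kernelMajorant ε L := by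
  have hE := norm_deriv_expQuot_le (ε * L)
  rw [Complex.re_ofReal_mul] at hE
  calc ‖L ^ 2 * deriv expQuot (ε * L)‖ ≤ ‖L‖ ^ 2 * (3 * (1 + Real.exp (ε * L.re))) := by
        rw [norm_mul, norm_pow]; gcongr
    _ = 3 * (‖L‖ ^ 2 * (1 + Real.exp (ε * L.re))) := by ring
    _ ≤ _ := by gcongr; exact norm_pow_mul_le_kernelMajorant le_rfl ε L

lemma norm_exp_mul_le_kernelMajorant (ε : ℝ) (L : ℂ) :
    ‖Complex.exp (ε * L)‖ ≤ kernelMajorant ε L := by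
  have h := norm_pow_mul_le_kernelMajorant zero_le_two ε L
  rw [Complex.norm_exp, Complex.re_ofReal_mul]
  linarith

lemma norm_powKernel_le (ε : ℝ) (L : ℂ) : ‖powKernel ε L‖ ≤ kernelMajorant ε L := by
  simpa [norm_powKernel, Complex.norm_exp] using norm_exp_mul_le_kernelMajorant ε L

lemma norm_sub_half_pi_mul_I_le (L : ℂ) : ‖L - Real.pi / 2 * I‖ ≤ 2 * (1 + ‖L‖) := by
  have hπ : ‖(Real.pi / 2 * I : ℂ)‖ ≤ 2 := by
    simp [abs_of_pos Real.pi_pos]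
    linarith [Real.pi_le_four]
  linarith [norm_sub_le L (Real.pi / 2 * I), norm_nonneg L]

lemma norm_sub_mul_powKernel_le (ε : ℝ) (L : ℂ) :
    ‖(L - Real.pi / 2 * I) * powKernel ε L‖ ≤ 2 * kernelMajorant ε L := by
  have hL := norm_nonneg L
  calc ‖(L - Real.pi / 2 * I) * powKernel ε L‖
      ≤ 2 * (1 + ‖L‖) * Real.exp (ε * L.re) := by
        rw [norm_mul, norm_powKernel]
        gcongr
        exact norm_sub_half_pi_mul_I_le L
    _ ≤ 2 * (1 + ‖L‖) ^ 2 * (1 + Real.exp (ε * L.re)) := by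
        gcongr
        · exact le_self_pow₀ (by linarith) two_ne_zero
        · linarith
    _ = _ := by rw [kernelMajorant]; ring

variable {ε₀ : ℝ}

lemma isBigO_of_norm_le_kernelMajorant {g : ℝ × ℂ → ℂ} {l : Filter (ℝ × ℂ)} (C : ℝ)
    (h : ∀ ε L, ‖g (ε, L)‖ ≤ C * kernelMajorant ε L) :
    g =O[l] fun p ↦ kernelMajorant p.1 p.2 :=
  .of_bound C (.of_forall fun p ↦ (h p.1 p.2).trans_eq (by
    rw [Real.norm_of_nonneg (zero_le_one.trans (one_le_kernelMajorant _ _))]))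

lemma isBigO_kernelMajorant_of_continuousAt {f : ℝ → ℝ} (hf : ContinuousAt f ε₀) :
    (fun p : ℝ × ℂ ↦ (f p.1 : ℂ)) =O[𝓝 ε₀ ×ˢ ⊤] fun p ↦ kernelMajorant p.1 p.2 := by
  simpa using isBigO_mul_of_continuousAt hf.ofReal (g := fun _ : ℝ × ℂ ↦ 1)
    (isBigO_of_norm_le_kernelMajorant 1 fun ε L ↦ by simpa using one_le_kernelMajorant ε L)

lemma continuousAt_deriv_of_contDiffAt {f : ℝ → ℝ} {x : ℝ} (hf : ContDiffAt ℝ 1 f x) :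
    ContinuousAt (deriv f) x :=
  (hf.continuousAt_fderiv one_ne_zero).clm_apply continuousAt_const

lemma skewKernel_isBigO (hε : ε₀ ∈ Set.Ioo (-1 : ℝ) 1) :
    (fun p : ℝ × ℂ ↦ skewKernel p.1 p.2) =O[𝓝 ε₀ ×ˢ ⊤] fun p ↦ kernelMajorant p.1 p.2 := by
  have hcsc : ContinuousAt cscQuot ε₀ := (contDiffAt_cscQuot (n := 0) hε).continuousAt
  have htan : ContinuousAt tanHalf ε₀ := (contDiffAt_tanHalf (n := 0) hε).continuousAt
  exact (isBigO_mul_of_continuousAt hcsc.ofReal (isBigO_of_norm_le_kernelMajorant 1 fun ε L ↦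
    (norm_mul_expQuot_le ε L).trans_eq (one_mul _).symm)).add
      (isBigO_kernelMajorant_of_continuousAt htan)

lemma skewKernelDeriv_isBigO (hε : ε₀ ∈ Set.Ioo (-1 : ℝ) 1) :
    (fun p : ℝ × ℂ ↦ skewKernelDeriv p.1 p.2) =O[𝓝 ε₀ ×ˢ ⊤]
      fun p ↦ kernelMajorant p.1 p.2 := by
  have hcsc : ContinuousAt cscQuot ε₀ := (contDiffAt_cscQuot (n := 0) hε).continuousAt
  have hcsc' := continuousAt_deriv_of_contDiffAt (contDiffAt_cscQuot hε)
  have htan' := continuousAt_deriv_of_contDiffAt (contDiffAt_tanHalf hε)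
  refine ((isBigO_mul_of_continuousAt hcsc'.ofReal
    (isBigO_of_norm_le_kernelMajorant 1 fun ε L ↦ ?_)).add
    (isBigO_mul_of_continuousAt hcsc.ofReal (isBigO_of_norm_le_kernelMajorant 3 fun ε L ↦
      norm_sq_mul_deriv_expQuot_le ε L))).add (isBigO_kernelMajorant_of_continuousAt htan')
  exact (norm_mul_expQuot_le ε L).trans_eq (one_mul _).symm

lemma cscQuot_mul_exp_isBigO (hε : ε₀ ∈ Set.Ioo (-1 : ℝ) 1) :
    (fun p : ℝ × ℂ ↦ cscQuot p.1 * Complex.exp (p.1 * p.2)) =O[𝓝 ε₀ ×ˢ ⊤]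
      fun p ↦ kernelMajorant p.1 p.2 :=
  isBigO_mul_of_continuousAt (contDiffAt_cscQuot (n := 0) hε).continuousAt.ofReal
    (isBigO_of_norm_le_kernelMajorant 1 fun ε L ↦
      (norm_exp_mul_le_kernelMajorant ε L).trans_eq (one_mul _).symm)

lemma powKernel_isBigO {l : Filter (ℝ × ℂ)} :
    (fun p : ℝ × ℂ ↦ powKernel p.1 p.2) =O[l] fun p ↦ kernelMajorant p.1 p.2 :=
  isBigO_of_norm_le_kernelMajorant 1 fun ε L ↦
    (norm_powKernel_le ε L).trans_eq (one_mul _).symm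

lemma powKernelDeriv_isBigO {l : Filter (ℝ × ℂ)} :
    (fun p : ℝ × ℂ ↦ (p.2 - Real.pi / 2 * I) * powKernel p.1 p.2) =O[l]
      fun p ↦ kernelMajorant p.1 p.2 :=
  isBigO_of_norm_le_kernelMajorant 2 norm_sub_mul_powKernel_le

end KernelGrowth

section ExponentGrowth

variable {θ₀ : Fin 4 → ℝ}

/-- The majorant of the exponent and of its parameter derivatives, up to a factor locally bounded
in `θ`. -/
def psiMajorant (θ : Fin 4 → ℝ) (v : ℂ) : ℝ :=
  ‖v‖ * kernelMajorant (θ 2 - 1) (logScaled (θ 1) v)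

lemma isBigO_psiMajorant_of_kernel {κ : ℝ → ℂ → ℂ}
    (hκ : (fun p : ℝ × ℂ ↦ κ p.1 p.2) =O[𝓝 (θ₀ 2 - 1) ×ˢ ⊤] fun p ↦ kernelMajorant p.1 p.2)
    {c : (Fin 4 → ℝ) → ℝ} (hc : Continuous c) :
    (fun p : (Fin 4 → ℝ) × ℂ ↦ (c p.1 : ℂ) * (p.2 * κ (p.1 2 - 1) (logScaled (p.1 1) p.2)))
      =O[𝓝 θ₀ ×ˢ ⊤] fun p ↦ psiMajorant p.1 p.2 := by
  have hlim : Tendsto (fun p : (Fin 4 → ℝ) × ℂ ↦ (p.1 2 - 1, logScaled (p.1 1) p.2))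
      (𝓝 θ₀ ×ˢ ⊤) (𝓝 (θ₀ 2 - 1) ×ˢ ⊤) :=
    ((((continuous_apply 2).sub continuous_const).tendsto θ₀).comp tendsto_fst).prodMk tendsto_top
  have hv : (fun p : (Fin 4 → ℝ) × ℂ ↦ p.2) =O[𝓝 θ₀ ×ˢ ⊤] fun p ↦ ‖p.2‖ :=
    isBigO_norm_right.2 (isBigO_refl _ _)
  exact isBigO_mul_of_continuousAt (Complex.continuous_ofReal.comp hc).continuousAt
    (hv.mul (hκ.comp_tendsto hlim))

lemma isBigO_psiMajorant_of_continuous {c : (Fin 4 → ℝ) → ℝ} (hc : Continuous c) :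
    (fun p : (Fin 4 → ℝ) × ℂ ↦ c p.1 * p.2) =O[𝓝 θ₀ ×ˢ ⊤] fun p ↦ psiMajorant p.1 p.2 := by
  simpa using isBigO_psiMajorant_of_kernel (κ := fun _ _ ↦ 1)
    (isBigO_of_norm_le_kernelMajorant 1 fun ε L ↦ by simpa using one_le_kernelMajorant ε L) hc

lemma realExponent_isBigO (hθ₀ : θ₀ ∈ stableDomain) :
    (fun p : (Fin 4 → ℝ) × ℂ ↦ realExponent p.1 p.2) =O[𝓝 θ₀ ×ˢ ⊤]
      fun p ↦ psiMajorant p.1 p.2 := by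
  have hlin := isBigO_psiMajorant_of_continuous (θ₀ := θ₀) (c := fun θ ↦ θ 0) (by fun_prop)
  have hskew := isBigO_psiMajorant_of_kernel
    (skewKernel_isBigO (sub_one_mem_Ioo_of_mem_stableDomain hθ₀))
    (c := fun θ ↦ θ 3 * θ 1) (by fun_prop)
  refine (hlin.sub hskew).congr_left fun p ↦ ?_
  rw [realExponent]
  push_cast
  ring

lemma branchExponent_isBigO (θ₀ : Fin 4 → ℝ) :
    (fun p : (Fin 4 → ℝ) × ℂ ↦ branchExponent p.1 p.2) =O[𝓝 θ₀ ×ˢ ⊤]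
      fun p ↦ psiMajorant p.1 p.2 := by
  refine (isBigO_psiMajorant_of_kernel powKernel_isBigO
    (c := fun θ ↦ (1 + θ 3) * θ 1) (by fun_prop)).congr_left fun p ↦ ?_
  rw [branchExponent]
  push_cast
  ring

lemma psiExt_isBigO (hθ₀ : θ₀ ∈ stableDomain) :
    (fun p : (Fin 4 → ℝ) × ℂ ↦ psiExt p.1 p.2) =O[𝓝 θ₀ ×ˢ ⊤] fun p ↦ psiMajorant p.1 p.2 :=
  (realExponent_isBigO hθ₀).add (branchExponent_isBigO θ₀)

lemma realExponentDeriv_isBigO (i : Fin 4) (hθ₀ : θ₀ ∈ stableDomain) :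
    (fun p : (Fin 4 → ℝ) × ℂ ↦ realExponentDeriv i p.1 p.2) =O[𝓝 θ₀ ×ˢ ⊤]
      fun p ↦ psiMajorant p.1 p.2 := by
  have hε := sub_one_mem_Ioo_of_mem_stableDomain hθ₀
  fin_cases i
  · exact (isBigO_psiMajorant_of_continuous (c := fun _ ↦ 1) (by fun_prop)).congr_left
      fun p ↦ by simp [realExponentDeriv]
  · exact (isBigO_psiMajorant_of_kernel
      (κ := fun ε L ↦ skewKernel ε L + cscQuot ε * Complex.exp (ε * L))
      ((skewKernel_isBigO hε).add (cscQuot_mul_exp_isBigO hε))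
      (c := fun θ ↦ -θ 3) (by fun_prop)).congr_left
        fun p ↦ by simp [realExponentDeriv, mul_assoc]
  · exact (isBigO_psiMajorant_of_kernel (skewKernelDeriv_isBigO hε)
      (c := fun θ ↦ -(θ 3 * θ 1)) (by fun_prop)).congr_left
        fun p ↦ by simp [realExponentDeriv, mul_assoc]
  · exact (isBigO_psiMajorant_of_kernel (skewKernel_isBigO hε)
      (c := fun θ ↦ -θ 1) (by fun_prop)).congr_left
        fun p ↦ by simp [realExponentDeriv, mul_assoc]

lemma branchExponentDeriv_isBigO (i : Fin 4) (θ₀ : Fin 4 → ℝ) :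
    (fun p : (Fin 4 → ℝ) × ℂ ↦ branchExponentDeriv i p.1 p.2) =O[𝓝 θ₀ ×ˢ ⊤]
      fun p ↦ psiMajorant p.1 p.2 := by
  fin_cases i
  · simpa [branchExponentDeriv] using isBigO_zero _ _
  · refine (isBigO_psiMajorant_of_kernel powKernel_isBigO
      (c := fun θ ↦ (1 + θ 3) * θ 2) (by fun_prop)).congr_left fun p ↦ ?_
    simp only [branchExponentDeriv, Fin.mk_one, Matrix.cons_val_one, Matrix.cons_val_zero]
    push_cast
    ring
  · exact (isBigO_psiMajorant_of_kernel
      (κ := fun ε L ↦ (L - Real.pi / 2 * I) * powKernel ε L) powKernelDeriv_isBigO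
      (c := fun θ ↦ (1 + θ 3) * θ 1) (by fun_prop)).congr_left
        fun p ↦ by simp [branchExponentDeriv, mul_assoc]
  · exact (isBigO_psiMajorant_of_kernel powKernel_isBigO
      (c := fun θ ↦ θ 1) (by fun_prop)).congr_left
        fun p ↦ by simp [branchExponentDeriv, mul_assoc]

lemma psiExtDeriv_isBigO (i : Fin 4) (hθ₀ : θ₀ ∈ stableDomain) :
    (fun p : (Fin 4 → ℝ) × ℂ ↦ psiExtDeriv i p.1 p.2) =O[𝓝 θ₀ ×ˢ ⊤]
      fun p ↦ psiMajorant p.1 p.2 :=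
  (realExponentDeriv_isBigO i hθ₀).add (branchExponentDeriv_isBigO i θ₀)

lemma one_add_norm_logScaled_le (σ : ℝ) (v : ℂ) :
    1 + ‖logScaled σ v‖ ≤ (1 + |Real.log σ| + Real.pi) * (1 + |Real.log ‖v‖|) := by
  have hlog : ‖logScaled σ v‖ ≤ |Real.log σ| + (|Real.log ‖v‖| + |v.arg|) := by
    refine norm_add_le_of_le (by simp) ?_
    simpa only [Complex.log_re, Complex.log_im] using
      Complex.norm_le_abs_re_add_abs_im (Complex.log v)
  have harg := Complex.abs_arg_le_pi v
  have hprod : 0 ≤ (|Real.log σ| + Real.pi) * |Real.log ‖v‖| := by positivity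
  linarith

lemma exp_mul_re_logScaled {σ : ℝ} (hσ : 0 < σ) (ε : ℝ) {v : ℂ} (hv : v ≠ 0) :
    Real.exp (ε * (logScaled σ v).re) = σ ^ ε * ‖v‖ ^ ε := by
  rw [Real.rpow_def_of_pos hσ, Real.rpow_def_of_pos (norm_pos_iff.2 hv), ← Real.exp_add,
    logScaled, Complex.add_re, Complex.ofReal_re, Complex.log_re]
  ring_nf

lemma psiMajorant_le {θ : Fin 4 → ℝ} (hσ : 0 < θ 1) {v : ℂ} (hv : v ≠ 0) :
    psiMajorant θ v ≤ (1 + |Real.log (θ 1)| + Real.pi) ^ 2 * (1 + θ 1 ^ (θ 2 - 1)) *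
      ((1 + |Real.log ‖v‖|) ^ 2 * ‖v‖ ^ (1 : ℝ) + (1 + |Real.log ‖v‖|) ^ 2 * ‖v‖ ^ θ 2) := by
  have hv' : 0 < ‖v‖ := norm_pos_iff.2 hv
  have hσε : 0 ≤ θ 1 ^ (θ 2 - 1) := Real.rpow_nonneg hσ.le _
  have hvε : 0 ≤ ‖v‖ ^ (θ 2 - 1) := Real.rpow_nonneg hv'.le _
  have hvα : ‖v‖ ^ θ 2 = ‖v‖ * ‖v‖ ^ (θ 2 - 1) := by
    rw [Real.rpow_sub_one hv'.ne']
    field_simp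
  rw [psiMajorant, kernelMajorant, exp_mul_re_logScaled hσ _ hv, hvα, Real.rpow_one]
  calc ‖v‖ * ((1 + ‖logScaled (θ 1) v‖) ^ 2 * (1 + θ 1 ^ (θ 2 - 1) * ‖v‖ ^ (θ 2 - 1)))
      ≤ ‖v‖ * (((1 + |Real.log (θ 1)| + Real.pi) * (1 + |Real.log ‖v‖|)) ^ 2 *
          ((1 + θ 1 ^ (θ 2 - 1)) * (1 + ‖v‖ ^ (θ 2 - 1)))) := by
        gcongr
        · exact one_add_norm_logScaled_le _ _
        · linarith
    _ = _ := by ring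

lemma exists_pos_add_lt_and_lt_sub {r a b s : ℝ} (hra : r < a) (hbs : b < s) :
    ∃ η > 0, r + η < a ∧ b < s - η := by
  refine ⟨min (a - r) (s - b) / 2, by simp [hra, hbs], ?_, ?_⟩
  · linarith [min_le_left (a - r) (s - b)]
  · linarith [min_le_right (a - r) (s - b)]

lemma psiMajorant_isBigO (hθ₀ : θ₀ ∈ stableDomain) {r s : ℝ} (hr : r < min 1 (θ₀ 2))
    (hs : max 1 (θ₀ 2) < s) :
    (fun p : (Fin 4 → ℝ) × ℂ ↦ psiMajorant p.1 p.2) =O[𝓝 θ₀ ×ˢ ⊤]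
      fun p ↦ ‖p.2‖ ^ r + ‖p.2‖ ^ s := by
  obtain ⟨η, hη, hηr, hηs⟩ := exists_pos_add_lt_and_lt_sub hr hs
  rw [lt_min_iff] at hηr
  rw [max_lt_iff] at hηs
  obtain ⟨C, hC, hlog⟩ := exists_one_add_abs_log_pow_mul_rpow_le 2 (r := r) (s := s) hη
  have hα : ∀ᶠ θ in 𝓝 θ₀, θ 2 ∈ Set.Ioo (r + η) (s - η) :=
    (continuous_apply 2).continuousAt.eventually_mem (Ioo_mem_nhds hηr.2 hηs.2)
  have hcoef : ContinuousAt (fun θ : Fin 4 → ℝ ↦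
      (1 + |Real.log (θ 1)| + Real.pi) ^ 2 * (1 + θ 1 ^ (θ 2 - 1))) θ₀ := by
    have hlog₀ : ContinuousAt (fun θ : Fin 4 → ℝ ↦ Real.log (θ 1)) θ₀ :=
      (continuous_apply 1).continuousAt.log hθ₀.1.ne'
    have hpow₀ : ContinuousAt (fun θ : Fin 4 → ℝ ↦ θ 1 ^ (θ 2 - 1)) θ₀ :=
      (continuous_apply 1).continuousAt.rpow
        ((continuous_apply 2).sub continuous_const).continuousAt (.inl hθ₀.1.ne')
    fun_prop
  obtain ⟨K, hK⟩ := (hcoef.isBigO_one ℝ).bound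
  refine .of_bound (K * (2 * C)) ?_
  have hθ := hα.and (hK.and (isOpen_stableDomain.eventually_mem hθ₀))
  refine (hθ.prod_inl ⊤).mono ?_
  rintro ⟨θ, v⟩ ⟨hα, hK, hσ, -⟩
  rcases eq_or_ne v 0 with rfl | hv
  · have hK0 : 0 ≤ K := by simpa using (norm_nonneg _).trans hK
    simp only [psiMajorant, norm_zero, zero_mul]
    positivity
  have h1 := hlog ‖v‖ (norm_pos_iff.2 hv) 1 ⟨hηr.1.le, hηs.1.le⟩
  have h2 := hlog ‖v‖ (norm_pos_iff.2 hv) (θ 2) ⟨hα.1.le, hα.2.le⟩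
  rw [norm_one, mul_one] at hK
  rw [Real.norm_of_nonneg (by unfold psiMajorant kernelMajorant; positivity),
    Real.norm_of_nonneg (by positivity)]
  calc psiMajorant θ v ≤ _ := psiMajorant_le hσ hv
    _ ≤ K * (C * (‖v‖ ^ r + ‖v‖ ^ s) + C * (‖v‖ ^ r + ‖v‖ ^ s)) := by
        gcongr
        · exact (norm_nonneg _).trans hK
        · exact (Real.le_norm_self _).trans hK
    _ = _ := by ring

end ExponentGrowth

section Decay

lemma exists_mul_rpow_le_mul_rpow_add {C c q a : ℝ} (hC : 0 ≤ C) (hc : 0 < c) (hq : 0 ≤ q)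
    (hqa : q < a) : ∃ K, ∀ u : ℝ, 0 ≤ u → C * u ^ q ≤ c * u ^ a + K := by
  set M : ℝ := (C / c) ^ (a - q)⁻¹ with hM
  have hM0 : 0 ≤ M := by positivity
  refine ⟨C * M ^ q, fun u hu ↦ ?_⟩
  rcases le_or_gt u M with h | h
  · have huM : C * u ^ q ≤ C * M ^ q := by gcongr
    have hua : 0 ≤ c * u ^ a := by positivity
    linarith
  · have hratio : C / c ≤ u ^ (a - q) := by
      calc C / c = M ^ (a - q) := by
            rw [hM, Real.rpow_inv_rpow (by positivity) (sub_pos.2 hqa).ne']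
        _ ≤ u ^ (a - q) := Real.rpow_le_rpow hM0 h.le (sub_pos.2 hqa).le
    have hlarge : C * u ^ q ≤ c * u ^ a := by
      calc C * u ^ q = c * (C / c * u ^ q) := by field_simp
        _ ≤ c * (u ^ (a - q) * u ^ q) := by gcongr
        _ = c * u ^ a := by rw [← Real.rpow_add (hM0.trans_lt h), sub_add_cancel]
    have hMq : 0 ≤ C * M ^ q := by positivity
    linarith

lemma one_add_rpow_le {y a : ℝ} (hy : 0 ≤ y) (ha : 0 ≤ a) :
    (1 + y) ^ a ≤ 2 ^ a * (1 + y ^ a) := by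
  calc (1 + y) ^ a ≤ (2 * max 1 y) ^ a := by
        gcongr
        linarith [le_max_left 1 y, le_max_right 1 y]
    _ = 2 ^ a * max 1 y ^ a := Real.mul_rpow zero_le_two (by positivity)
    _ ≤ 2 ^ a * (1 + y ^ a) := by
        gcongr
        rcases max_choice 1 y with h | h <;> rw [h]
        · linarith [Real.one_rpow a, Real.rpow_nonneg hy a]
        · linarith

lemma exists_one_add_pow_mul_exp_le (n : ℕ) {C c q a : ℝ} (hC : 0 ≤ C) (hc : 0 < c) (hq : 0 ≤ q)
    (hqa : q < a) :
    ∃ K > 0, ∀ y : ℝ, 0 ≤ y →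
      (1 + y) ^ n * Real.exp (C * (1 + y) ^ q - c * y ^ a) ≤ K := by
  have ha : 0 < a := hq.trans_lt hqa
  obtain ⟨K₁, hK₁⟩ := exists_mul_rpow_le_mul_rpow_add hC (c := c / 2 ^ a / 2) (by positivity)
    hq hqa
  obtain ⟨K₂, hK₂⟩ := exists_mul_rpow_le_mul_rpow_add (C := n / (a / 2)) (by positivity)
    (c := c / 2 ^ a / 2) (by positivity) (half_pos ha).le (half_lt_self ha)
  refine ⟨Real.exp (K₁ + K₂ + c), Real.exp_pos _, fun y hy ↦ ?_⟩
  have hu : 0 < 1 + y := by linarith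
  have hlog : n * Real.log (1 + y) ≤ n / (a / 2) * (1 + y) ^ (a / 2) := by
    rw [div_mul_eq_mul_div, mul_div_assoc]
    gcongr
    exact Real.log_le_rpow_div hu.le (half_pos ha)
  have hcmp : c / 2 ^ a * (1 + y) ^ a ≤ c + c * y ^ a := by
    rw [div_mul_eq_mul_div, div_le_iff₀ (by positivity)]
    nlinarith [one_add_rpow_le hy ha.le]
  rw [← Real.exp_log (pow_pos hu n), Real.log_pow, ← Real.exp_add, Real.exp_le_exp]
  linarith [hK₁ _ hu.le, hK₂ _ hu.le]

lemma exists_one_add_pow_mul_exp_le_inv_one_add_sq (n : ℕ) {C c q a : ℝ} (hC : 0 ≤ C)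
    (hc : 0 < c) (hq : 0 ≤ q) (hqa : q < a) :
    ∃ K > 0, ∀ y : ℝ, 0 ≤ y →
      (1 + y) ^ n * Real.exp (C * (1 + y) ^ q - c * y ^ a) ≤ K * (1 + y ^ 2)⁻¹ := by
  obtain ⟨K, hK, hbound⟩ := exists_one_add_pow_mul_exp_le (n + 2) hC hc hq hqa
  refine ⟨K, hK, fun y hy ↦ ?_⟩
  rw [← div_eq_mul_inv, le_div_iff₀ (by positivity)]
  refine le_trans ?_ (hbound y hy)
  calc _ = (1 + y) ^ n * (1 + y ^ 2) * Real.exp (C * (1 + y) ^ q - c * y ^ a) := by ring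
    _ ≤ (1 + y) ^ n * (1 + y) ^ 2 * Real.exp (C * (1 + y) ^ q - c * y ^ a) := by
        gcongr
        nlinarith
    _ = _ := by rw [pow_add]

lemma eventually_forall_rpow_le {θ₀ : Fin 4 → ℝ} (hθ₀ : θ₀ ∈ stableDomain) :
    ∀ᶠ θ in 𝓝 θ₀, ∀ t : ℝ, 0 < t →
      (θ₀ 1 / 2) ^ (θ₀ 2 / 2) * t ^ (θ₀ 2 / 2) ≤ 1 + (θ 1 * t) ^ θ 2 := by
  have hσ : ∀ᶠ θ in 𝓝 θ₀, θ₀ 1 / 2 < θ 1 :=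
    (continuous_apply 1).continuousAt.eventually (lt_mem_nhds (half_lt_self hθ₀.1))
  have hα : ∀ᶠ θ in 𝓝 θ₀, θ₀ 2 / 2 < θ 2 :=
    (continuous_apply 2).continuousAt.eventually (lt_mem_nhds (half_lt_self hθ₀.2.1))
  filter_upwards [hσ, hα] with θ hσ hα t ht
  have hσ₀ : 0 < θ₀ 1 / 2 := half_pos hθ₀.1
  have hα₀ : 0 < θ₀ 2 / 2 := half_pos hθ₀.2.1
  calc (θ₀ 1 / 2) ^ (θ₀ 2 / 2) * t ^ (θ₀ 2 / 2) = (θ₀ 1 / 2 * t) ^ (θ₀ 2 / 2) :=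
        (Real.mul_rpow hσ₀.le ht.le).symm
    _ ≤ (θ₀ 1 / 2 * t) ^ (0 : ℝ) + (θ₀ 1 / 2 * t) ^ θ 2 :=
        rpow_le_rpow_add_rpow (by positivity) hα₀.le hα.le
    _ ≤ 1 + (θ 1 * t) ^ θ 2 := by
        rw [Real.rpow_zero]
        have := hα₀.trans hα
        gcongr

lemma exists_eventually_norm_exp_psiExt_mul_le {θ₀ : Fin 4 → ℝ} (hθ₀ : θ₀ ∈ stableDomain)
    {g : (Fin 4 → ℝ) × ℂ → ℂ} {n : ℕ} (hg : g =O[𝓝 θ₀ ×ˢ ⊤] fun p ↦ (1 + ‖p.2‖) ^ n) :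
    ∃ C > 0, ∀ᶠ θ in 𝓝 θ₀, ∀ t : ℝ, 0 < t →
      ‖Complex.exp (psiExt θ (t * I)) * g (θ, t * I)‖ ≤ C * (1 + t ^ 2)⁻¹ := by
  obtain ⟨D, hD, hgD⟩ := exists_eventually_forall_norm_le hg
  have hσ₀ : 0 < θ₀ 1 / 2 := half_pos hθ₀.1
  obtain ⟨K, hK, hdecay⟩ := exists_one_add_pow_mul_exp_le_inv_one_add_sq n zero_le_one
    (Real.rpow_pos_of_pos hσ₀ (θ₀ 2 / 2)) le_rfl (half_pos hθ₀.2.1)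
  refine ⟨D * K, by positivity, ?_⟩
  filter_upwards [hgD, eventually_forall_rpow_le hθ₀, isOpen_stableDomain.eventually_mem hθ₀]
    with θ hgD hpow hθ t ht
  have hgt := hgD (t * I)
  have hnorm : ‖(t * I : ℂ)‖ = t := by simp [abs_of_pos ht]
  rw [hnorm, Real.norm_of_nonneg (by positivity)] at hgt
  calc ‖Complex.exp (psiExt θ (t * I)) * g (θ, t * I)‖
      ≤ Real.exp (1 * (1 + t) ^ (0 : ℝ) - (θ₀ 1 / 2) ^ (θ₀ 2 / 2) * t ^ (θ₀ 2 / 2)) *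
          (D * (1 + t) ^ n) := by
        rw [norm_mul, Complex.norm_exp, re_psiExt_mul_I hθ ht, Real.rpow_zero]
        gcongr
        linarith [hpow t ht]
    _ = D * ((1 + t) ^ n * Real.exp (1 * (1 + t) ^ (0 : ℝ) -
          (θ₀ 1 / 2) ^ (θ₀ 2 / 2) * t ^ (θ₀ 2 / 2))) := by ring
    _ ≤ D * (K * (1 + t ^ 2)⁻¹) := mul_le_mul_of_nonneg_left (hdecay t ht.le) hD.le
    _ = _ := by ring

end Decay

section HalfStrip

/-- The closed half-strip `0 ≤ re v ≤ 1`, `0 ≤ im v`, through which the contour is moved. -/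
def halfStrip : Set ℂ := Set.Icc 0 1 ×ℂ Set.Ici 0

/-- The function whose transform along the positive imaginary axis is `∂ f / ∂ θᵢ` for `k = 0`, and
`-∂² f / ∂x ∂θᵢ` for `k = 1`, up to a factor. -/
def charDeriv (i : Fin 4) (k : ℕ) (θ : Fin 4 → ℝ) (v : ℂ) : ℂ :=
  Complex.exp (psiExt θ v) * (v ^ k * psiExtDeriv i θ v)

variable {θ θ₀ : Fin 4 → ℝ}

lemma norm_le_one_add_im {v : ℂ} (hv : v ∈ halfStrip) : ‖v‖ ≤ 1 + v.im := by
  have h := Complex.norm_le_abs_re_add_abs_im v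
  rw [abs_of_nonneg hv.1.1, abs_of_nonneg hv.2] at h
  exact h.trans (by gcongr; exact hv.1.2)

lemma exists_norm_le_of_isBigO_psiMajorant (hθ : θ ∈ stableDomain)
    {F : (Fin 4 → ℝ) × ℂ → ℂ} (hF : F =O[𝓝 θ ×ˢ ⊤] fun p ↦ psiMajorant p.1 p.2) {r s : ℝ}
    (hr : r < min 1 (θ 2)) (hs : max 1 (θ 2) < s) :
    ∃ C > 0, ∀ v, ‖F (θ, v)‖ ≤ C * (‖v‖ ^ r + ‖v‖ ^ s) := by
  obtain ⟨C, hC, h⟩ := exists_forall_norm_le (hF.trans (psiMajorant_isBigO hθ hr hs))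
  refine ⟨C, hC, fun v ↦ ?_⟩
  simpa only [Real.norm_of_nonneg (show 0 ≤ ‖v‖ ^ r + ‖v‖ ^ s by positivity)] using h v

lemma exists_norm_psiExt_le (hθ : θ ∈ stableDomain) {r s : ℝ} (hr : r < min 1 (θ 2))
    (hs : max 1 (θ 2) < s) : ∃ C > 0, ∀ v, ‖psiExt θ v‖ ≤ C * (‖v‖ ^ r + ‖v‖ ^ s) :=
  exists_norm_le_of_isBigO_psiMajorant hθ (psiExt_isBigO hθ) hr hs

lemma exists_norm_psiExtDeriv_le (i : Fin 4) (hθ : θ ∈ stableDomain) {r s : ℝ}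
    (hr : r < min 1 (θ 2)) (hs : max 1 (θ 2) < s) :
    ∃ C > 0, ∀ v, ‖psiExtDeriv i θ v‖ ≤ C * (‖v‖ ^ r + ‖v‖ ^ s) :=
  exists_norm_le_of_isBigO_psiMajorant hθ (psiExtDeriv_isBigO i hθ) hr hs

lemma pow_isBigO_one_add_norm_pow {n k : ℕ} (hkn : k ≤ n) (l : Filter ((Fin 4 → ℝ) × ℂ)) :
    (fun p : (Fin 4 → ℝ) × ℂ ↦ p.2 ^ k) =O[l] fun p ↦ (1 + ‖p.2‖) ^ n := by
  refine .of_norm_le fun p ↦ ?_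
  have hp := norm_nonneg p.2
  rw [norm_pow]
  exact (pow_le_pow_left₀ hp (by linarith) k).trans (pow_le_pow_right₀ (by linarith) hkn)

lemma psiExtDeriv_isBigO_one_add_norm_sq (i : Fin 4) (hθ₀ : θ₀ ∈ stableDomain) :
    (fun p : (Fin 4 → ℝ) × ℂ ↦ psiExtDeriv i p.1 p.2) =O[𝓝 θ₀ ×ˢ ⊤]
      fun p ↦ (1 + ‖p.2‖) ^ 2 := by
  refine ((psiExtDeriv_isBigO i hθ₀).trans (psiMajorant_isBigO hθ₀ (r := 0) (s := 2)
    (lt_min one_pos hθ₀.2.1) (max_lt one_lt_two hθ₀.2.2))).trans ?_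
  simp only [Real.rpow_zero, Real.rpow_two]
  simpa using (pow_isBigO_one_add_norm_pow (Nat.zero_le 2) _).norm_left.add
    (pow_isBigO_one_add_norm_pow (le_refl 2) _).norm_left

lemma pow_mul_psiExtDeriv_isBigO (i : Fin 4) (k : ℕ) (hθ₀ : θ₀ ∈ stableDomain) :
    (fun p : (Fin 4 → ℝ) × ℂ ↦ p.2 ^ k * psiExtDeriv i p.1 p.2) =O[𝓝 θ₀ ×ˢ ⊤]
      fun p ↦ (1 + ‖p.2‖) ^ (k + 2) := by
  simpa only [pow_add] using
    (pow_isBigO_one_add_norm_pow le_rfl _).mul (psiExtDeriv_isBigO_one_add_norm_sq i hθ₀)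

lemma exists_norm_deriv_psiExt_le (hθ : θ ∈ stableDomain) {q : ℝ} (hq : 0 < q)
    (hαq : θ 2 - 1 < q) :
    ∃ C > 0, ∀ v : ℂ, 1 ≤ ‖v‖ → ‖θ 0 + θ 1 * psiExtDeriv 1 θ v / v‖ ≤ C * ‖v‖ ^ q := by
  obtain ⟨C, hC, h⟩ := exists_norm_psiExtDeriv_le 1 hθ (r := 0) (s := 1 + q)
    (lt_min one_pos hθ.2.1) (max_lt (by linarith) (by linarith))
  have hσ := hθ.1
  refine ⟨|θ 0| + θ 1 * (C * 2), by positivity, fun v hv ↦ ?_⟩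
  have hv0 : 0 < ‖v‖ := by linarith
  have hderiv : ‖psiExtDeriv 1 θ v‖ ≤ C * 2 * ‖v‖ ^ q * ‖v‖ := by
    calc ‖psiExtDeriv 1 θ v‖ ≤ C * (‖v‖ ^ (0 : ℝ) + ‖v‖ ^ (1 + q)) := h v
      _ ≤ C * (‖v‖ ^ (1 + q) + ‖v‖ ^ (1 + q)) := by
          gcongr
          linarith
      _ = _ := by rw [Real.rpow_add hv0, Real.rpow_one]; ring
  calc ‖θ 0 + θ 1 * psiExtDeriv 1 θ v / v‖ ≤ |θ 0| + θ 1 * ‖psiExtDeriv 1 θ v‖ / ‖v‖ := by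
        refine (norm_add_le _ _).trans_eq ?_
        rw [norm_div, norm_mul, Complex.norm_real, Complex.norm_real, Real.norm_of_nonneg hσ.le,
          Real.norm_eq_abs]
    _ ≤ |θ 0| * ‖v‖ ^ q + θ 1 * (C * 2 * ‖v‖ ^ q) := by
        gcongr
        · exact le_mul_of_one_le_right (abs_nonneg _) (Real.one_le_rpow hv hq.le)
        · rw [mul_div_assoc]
          gcongr
          exact (div_le_iff₀ hv0).2 hderiv
    _ = _ := by ring

lemma exists_re_psiExt_le_of_one_le_im (hθ : θ ∈ stableDomain) {q : ℝ} (hq : 0 < q)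
    (hαq : θ 2 - 1 < q) :
    ∃ C > 0, ∀ v ∈ halfStrip, 1 ≤ v.im →
      (psiExt θ v).re ≤ C * (1 + v.im) ^ q - (θ 1 * v.im) ^ θ 2 := by
  obtain ⟨C, hC, hderiv⟩ := exists_norm_deriv_psiExt_le hθ hq hαq
  refine ⟨C, hC, fun v hv him ↦ ?_⟩
  have hsegment : Convex ℝ (Set.Icc (0 : ℝ) 1 ×ℂ {v.im}) :=
    ((convex_Icc 0 1).linear_preimage Complex.reLm).inter
      ((convex_singleton v.im).linear_preimage Complex.imLm)
  have hmean := hsegment.norm_image_sub_le_of_norm_hasDerivWithin_le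
    (f := psiExt θ) (C := C * (1 + v.im) ^ q) (x := v.im * I) (y := v)
    (fun w hw ↦ (hasDerivAt_psiExt θ (.inr ?_)).hasDerivWithinAt) (fun w hw ↦ ?_)
    (by simp [Complex.mem_reProdIm]) ⟨hv.1, rfl⟩
  · have hdist : ‖v - v.im * I‖ ≤ 1 := by
      rw [show v - v.im * I = v.re by rw [sub_eq_iff_eq_add, Complex.re_add_im], Complex.norm_real,
        Real.norm_of_nonneg hv.1.1]
      exact hv.1.2
    have hre : (psiExt θ v - psiExt θ (v.im * I)).re ≤ C * (1 + v.im) ^ q :=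
      (Complex.re_le_norm _).trans (hmean.trans (mul_le_of_le_one_right (by positivity) hdist))
    rw [Complex.sub_re, re_psiExt_mul_I hθ (by linarith)] at hre
    linarith
  · rw [hw.2]; positivity
  · have hw_im : w.im = v.im := hw.2
    have hnorm : 1 ≤ ‖w‖ := him.trans (hw_im ▸ (le_abs_self _).trans (Complex.abs_im_le_norm w))
    refine (hderiv w hnorm).trans ?_
    gcongr
    exact hw_im ▸ norm_le_one_add_im ⟨hw.1, show 0 ≤ w.im from hw_im ▸ hv.2⟩

lemma exists_re_psiExt_le (hθ : θ ∈ stableDomain) :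
    ∃ q C, 0 ≤ q ∧ q < θ 2 ∧ 0 ≤ C ∧ ∀ v ∈ halfStrip,
      (psiExt θ v).re ≤ C * (1 + v.im) ^ q - (θ 1 * v.im) ^ θ 2 := by
  obtain ⟨hσ, hα⟩ := id hθ
  obtain ⟨q, hq, hqα⟩ : ∃ q, max 0 (θ 2 - 1) < q ∧ q < θ 2 :=
    exists_between (max_lt hα.1 (by linarith))
  obtain ⟨hq0, hαq⟩ := max_lt_iff.1 hq
  obtain ⟨C₁, hC₁, hfar⟩ := exists_re_psiExt_le_of_one_le_im hθ hq0 hαq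
  obtain ⟨C₂, hC₂, hnear⟩ := exists_norm_psiExt_le hθ (r := 0) (s := 2)
    (lt_min one_pos hα.1) (max_lt one_lt_two hα.2)
  refine ⟨q, C₁ + (C₂ * (1 + 2 ^ 2) + θ 1 ^ θ 2), hq0.le, hqα, by positivity, fun v hv ↦ ?_⟩
  have him : 0 ≤ v.im := hv.2
  have hone : 1 ≤ (1 + v.im) ^ q := Real.one_le_rpow (by linarith) hq0.le
  rcases le_total 1 v.im with h1 | h1
  · refine (hfar v hv h1).trans ?_
    gcongr
    exact le_add_of_nonneg_right (by positivity)
  · have hpow : (θ 1 * v.im) ^ θ 2 ≤ θ 1 ^ θ 2 := by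
      gcongr
      · exact hα.1.le
      · exact mul_le_of_le_one_right hσ.le h1
    have hre : (psiExt θ v).re ≤ C₂ * (1 + 2 ^ 2) := by
      refine (Complex.re_le_norm _).trans ((hnear v).trans ?_)
      rw [Real.rpow_zero, Real.rpow_two]
      gcongr
      linarith [norm_le_one_add_im hv]
    have hcoef : 0 ≤ C₁ + (C₂ * (1 + 2 ^ 2) + θ 1 ^ θ 2) := by positivity
    linarith [le_mul_of_one_le_right hcoef hone]

lemma exists_norm_charDeriv_le (i : Fin 4) (k : ℕ) (hθ : θ ∈ stableDomain) :
    ∃ C > 0, ∀ v ∈ halfStrip, ‖charDeriv i k θ v‖ ≤ C * (1 + v.im ^ 2)⁻¹ := by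
  obtain ⟨q, C, hq, hqα, hC, hre⟩ := exists_re_psiExt_le hθ
  obtain ⟨D, hD, hpoly⟩ := exists_forall_norm_le (pow_mul_psiExtDeriv_isBigO i k hθ)
  obtain ⟨K, hK, hdecay⟩ := exists_one_add_pow_mul_exp_le_inv_one_add_sq (k + 2) hC
    (Real.rpow_pos_of_pos hθ.1 (θ 2)) hq hqα
  refine ⟨D * 2 ^ (k + 2) * K, by positivity, fun v hv ↦ ?_⟩
  have him : 0 ≤ v.im := hv.2
  have hexp := hre v hv
  rw [Real.mul_rpow hθ.1.le him] at hexp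
  have hfactor : ‖v ^ k * psiExtDeriv i θ v‖ ≤ D * (2 * (1 + v.im)) ^ (k + 2) := by
    refine (hpoly v).trans ?_
    rw [Real.norm_of_nonneg (by positivity)]
    gcongr
    linarith [norm_le_one_add_im hv]
  calc ‖charDeriv i k θ v‖
      ≤ Real.exp (C * (1 + v.im) ^ q - θ 1 ^ θ 2 * v.im ^ θ 2) *
          (D * (2 * (1 + v.im)) ^ (k + 2)) := by
        rw [charDeriv, norm_mul, Complex.norm_exp]
        gcongr
    _ = D * 2 ^ (k + 2) * ((1 + v.im) ^ (k + 2) *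
          Real.exp (C * (1 + v.im) ^ q - θ 1 ^ θ 2 * v.im ^ θ 2)) := by
        rw [mul_pow]; ring
    _ ≤ D * 2 ^ (k + 2) * (K * (1 + v.im ^ 2)⁻¹) :=
        mul_le_mul_of_nonneg_left (hdecay _ him) (by positivity)
    _ = _ := by ring

end HalfStrip

section ContourShift

/-- The Laplace transform of `G` along the positive imaginary axis. -/
def axisLaplace (G : ℂ → ℂ) (x : ℝ) : ℂ :=
  ∫ y in Set.Ioi (0 : ℝ), Complex.exp (-(x * (y * I))) * G (y * I)

variable {F G : ℂ → ℂ} {C x : ℝ}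

lemma ofReal_add_mul_I_mem_halfStrip {b y : ℝ} (hb : b ∈ Set.Icc (0 : ℝ) 1) (hy : 0 ≤ y) :
    (b + y * I : ℂ) ∈ halfStrip := by
  simpa [halfStrip, Complex.mem_reProdIm] using ⟨hb, hy⟩

lemma integrableOn_vertical_of_norm_le (hc : ContinuousOn F halfStrip)
    (hF : ∀ v ∈ halfStrip, ‖F v‖ ≤ C * (1 + v.im ^ 2)⁻¹) {b : ℝ} (hb : b ∈ Set.Icc (0 : ℝ) 1) :
    IntegrableOn (fun y : ℝ ↦ F (b + y * I)) (Set.Ioi 0) := by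
  have hmem : ∀ y ∈ Set.Ioi (0 : ℝ), (b + y * I : ℂ) ∈ halfStrip := fun y hy ↦
    ofReal_add_mul_I_mem_halfStrip hb (Set.mem_Ioi.1 hy).le
  refine (integrable_inv_one_add_sq.const_mul C).integrableOn.mono'
    ((hc.comp (by fun_prop) hmem).aestronglyMeasurable measurableSet_Ioi)
    ((ae_restrict_mem measurableSet_Ioi).mono fun y hy ↦ ?_)
  simpa using hF _ (hmem y hy)

lemma tendsto_integral_horizontal_zero (hF : ∀ v ∈ halfStrip, ‖F v‖ ≤ C * (1 + v.im ^ 2)⁻¹) :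
    Tendsto (fun N : ℝ ↦ ∫ b in (0 : ℝ)..1, F (b + N * I)) atTop (𝓝 0) := by
  have hbound : Tendsto (fun N : ℝ ↦ C * (1 + N ^ 2)⁻¹) atTop (𝓝 0) := by
    simpa using (tendsto_inv_atTop_zero.comp (tendsto_atTop_add_const_left atTop (1 : ℝ)
      (tendsto_pow_atTop two_ne_zero))).const_mul C
  refine squeeze_zero_norm' ?_ hbound
  filter_upwards [eventually_ge_atTop 0] with N hN
  have hle := intervalIntegral.norm_integral_le_of_norm_le_const (a := (0 : ℝ)) (b := 1)
    (f := fun b : ℝ ↦ F (b + N * I)) (C := C * (1 + N ^ 2)⁻¹) fun b hb ↦ ?_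
  · simpa using hle
  · rw [Set.uIoc_of_le zero_le_one] at hb
    simpa using hF _ (ofReal_add_mul_I_mem_halfStrip (Set.Ioc_subset_Icc_self hb) hN)

lemma integral_imaginaryAxis_eq_sub (hc : ContinuousOn F halfStrip)
    (hd : DifferentiableOn ℂ F (Set.Ioo 0 1 ×ℂ Set.Ioi 0))
    (hF : ∀ v ∈ halfStrip, ‖F v‖ ≤ C * (1 + v.im ^ 2)⁻¹) :
    ∫ y in Set.Ioi (0 : ℝ), F (y * I) =
      (∫ y in Set.Ioi (0 : ℝ), F (1 + y * I)) - I * ∫ b in (0 : ℝ)..1, F b := by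
  have hrect : ∀ N : ℝ, 0 < N → (∫ b in (0 : ℝ)..1, F b) - (∫ b in (0 : ℝ)..1, F (b + N * I)) +
      I * (∫ y in (0 : ℝ)..N, F (1 + y * I)) - I * (∫ y in (0 : ℝ)..N, F (y * I)) = 0 := by
    intro N hN
    have hcauchy := Complex.integral_boundary_rect_eq_zero_of_continuousOn_of_differentiableOn F 0
      (1 + N * I) (hc.mono ?_) (hd.mono ?_)
    · simpa using hcauchy
    · simpa [halfStrip, Set.uIcc_of_le, hN.le] using
        Complex.reProdIm_subset_iff.2 (Set.prod_mono subset_rfl Set.Icc_subset_Ici_self)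
    · simpa [hN.le] using
        Complex.reProdIm_subset_iff.2 (Set.prod_mono subset_rfl Set.Ioo_subset_Ioi_self)
  have hright := intervalIntegral_tendsto_integral_Ioi 0
    (by simpa using integrableOn_vertical_of_norm_le hc hF (Set.right_mem_Icc.2 zero_le_one))
    tendsto_id
  have hleft := intervalIntegral_tendsto_integral_Ioi 0
    (by simpa using integrableOn_vertical_of_norm_le hc hF (Set.left_mem_Icc.2 zero_le_one))
    tendsto_id
  have hlim := (((tendsto_integral_horizontal_zero hF).const_sub (∫ b in (0 : ℝ)..1, F b)).add
    (hright.const_mul I)).sub (hleft.const_mul I)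
  have hzero := tendsto_nhds_unique
    (hlim.congr' ((eventually_gt_atTop 0).mono hrect)) tendsto_const_nhds
  linear_combination I * hzero + ((∫ y in Set.Ioi (0 : ℝ), F (1 + y * I)) -
    ∫ y in Set.Ioi (0 : ℝ), F (y * I)) * (-Complex.I_sq)

lemma im_integral_exp_neg_mul (hc : ContinuousOn G halfStrip) (x : ℝ) :
    (∫ b in (0 : ℝ)..1, Complex.exp (-(x * b)) * G b).im =
      ∫ b in (0 : ℝ)..1, Real.exp (-(x * b)) * (G b).im := by
  have hint : IntervalIntegrable (fun b : ℝ ↦ Complex.exp (-(x * b)) * G b) volume 0 1 := by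
    refine ContinuousOn.intervalIntegrable (.mul (by fun_prop)
      (hc.comp (by fun_prop) fun b hb ↦ ?_))
    rw [Set.uIcc_of_le zero_le_one] at hb
    simpa using ofReal_add_mul_I_mem_halfStrip hb le_rfl
  refine (Complex.imCLM.intervalIntegral_comp_comm hint).symm.trans
    (intervalIntegral.integral_congr fun b _ ↦ ?_)
  rw [Complex.imCLM_apply, ← Complex.im_ofReal_mul]
  push_cast
  rfl

-- After the shift the segment `[0, 1]` contributes `-i ∫ F`, whose real part only sees `im G`.
lemma abs_re_axisLaplace_le (hc : ContinuousOn G halfStrip)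
    (hd : DifferentiableOn ℂ G (Set.Ioo 0 1 ×ℂ Set.Ioi 0))
    (hG : ∀ v ∈ halfStrip, ‖G v‖ ≤ C * (1 + v.im ^ 2)⁻¹) (hx : 0 ≤ x) :
    |(axisLaplace G x).re| ≤ C * (Real.pi / 2) * Real.exp (-x) +
      |∫ b in (0 : ℝ)..1, Real.exp (-(x * b)) * (G b).im| := by
  set F : ℂ → ℂ := fun v ↦ Complex.exp (-(x * v)) * G v with hFdef
  have hnorm : ∀ v ∈ halfStrip,
      ‖F v‖ ≤ Real.exp (-(x * v.re)) * (C * (1 + v.im ^ 2)⁻¹) := fun v hv ↦ by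
    rw [hFdef, norm_mul, Complex.norm_exp, Complex.neg_re, Complex.re_ofReal_mul]
    gcongr
    exact hG v hv
  have hF : ∀ v ∈ halfStrip, ‖F v‖ ≤ C * (1 + v.im ^ 2)⁻¹ := fun v hv ↦
    (hnorm v hv).trans (mul_le_of_le_one_left ((norm_nonneg _).trans (hG v hv))
      (Real.exp_le_one_iff.2 (neg_nonpos.2 (mul_nonneg hx hv.1.1))))
  have hcF : ContinuousOn F halfStrip := ContinuousOn.mul (by fun_prop) hc
  have hright : ‖∫ y in Set.Ioi (0 : ℝ), F (1 + y * I)‖ ≤ C * (Real.pi / 2) * Real.exp (-x) := by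
    calc ‖∫ y in Set.Ioi (0 : ℝ), F (1 + y * I)‖
        ≤ ∫ y in Set.Ioi (0 : ℝ), Real.exp (-x) * (C * (1 + y ^ 2)⁻¹) := by
          refine norm_integral_le_of_norm_le
            ((integrable_inv_one_add_sq.const_mul C).const_mul _).integrableOn
            ((ae_restrict_mem measurableSet_Ioi).mono fun y hy ↦ ?_)
          simpa using hnorm _ (ofReal_add_mul_I_mem_halfStrip (Set.right_mem_Icc.2 zero_le_one)
            (Set.mem_Ioi.1 hy).le)
      _ = _ := by
          rw [integral_const_mul, integral_const_mul, integral_Ioi_inv_one_add_sq,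
            Real.arctan_zero, sub_zero]
          ring
  rw [axisLaplace, integral_imaginaryAxis_eq_sub hcF (.mul (by fun_prop) hd) hF, Complex.sub_re,
    Complex.I_mul_re, im_integral_exp_neg_mul hc, sub_neg_eq_add]
  exact (abs_add_le _ _).trans (by gcongr; exact (Complex.abs_re_le_norm _).trans hright)

end ContourShift

section Watson

lemma integrableOn_one_add_abs_log_pow_mul_rpow_mul_exp_neg (j : ℕ) {a : ℝ} (ha : -1 < a) :
    IntegrableOn (fun u ↦ (1 + |Real.log u|) ^ j * u ^ a * Real.exp (-u)) (Set.Ioi 0) := by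
  have hη : 0 < (a + 1) / 2 := by linarith
  obtain ⟨C, -, hlog⟩ := exists_one_add_abs_log_pow_mul_rpow_le j
    (r := a - (a + 1) / 2) (s := a + (a + 1) / 2) hη
  have hGamma {s : ℝ} (hs : -1 < s) :
      IntegrableOn (fun u ↦ Real.exp (-u) * u ^ s) (Set.Ioi 0) := by
    simpa using Real.GammaIntegral_convergent (s := s + 1) (by linarith)
  refine (((hGamma (s := a - (a + 1) / 2) (by linarith)).add
    (hGamma (s := a + (a + 1) / 2) (by linarith))).const_mul C).mono' (by fun_prop)
    ((ae_restrict_mem measurableSet_Ioi).mono fun u hu ↦ ?_)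
  have hu : 0 < u := hu
  rw [Real.norm_of_nonneg (by positivity)]
  calc (1 + |Real.log u|) ^ j * u ^ a * Real.exp (-u)
      ≤ C * (u ^ (a - (a + 1) / 2) + u ^ (a + (a + 1) / 2)) * Real.exp (-u) :=
        mul_le_mul_of_nonneg_right (hlog u hu a ⟨by linarith, by linarith⟩) (Real.exp_pos _).le
    _ = _ := by simp only [Pi.add_apply]; ring

lemma one_add_abs_log_le_mul {x b : ℝ} (hx : 1 ≤ x) (hb : 0 < b) :
    1 + |Real.log b| ≤ (1 + Real.log x) * (1 + |Real.log (x * b)|) := by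
  have hlogx : 0 ≤ Real.log x := Real.log_nonneg hx
  have htri : |Real.log b| ≤ Real.log x + |Real.log (x * b)| := by
    rw [Real.log_mul (by linarith) hb.ne']
    refine abs_le.2 ⟨?_, ?_⟩ <;> cases abs_cases (Real.log x + Real.log b) <;> linarith
  nlinarith [mul_nonneg hlogx (abs_nonneg (Real.log (x * b)))]

variable {h : ℝ → ℝ} {a D : ℝ} {j : ℕ}

lemma abs_exp_neg_mul_le
    (hh : ∀ b ∈ Set.Ioc (0 : ℝ) 1, |h b| ≤ D * (b ^ a * (1 + |Real.log b|) ^ j))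
    {x b : ℝ} (hx : 1 ≤ x) (hb : b ∈ Set.Ioc (0 : ℝ) 1) :
    |Real.exp (-(x * b)) * h b| ≤ D * x ^ (-a) * (1 + Real.log x) ^ j *
      ((1 + |Real.log (x * b)|) ^ j * (x * b) ^ a * Real.exp (-(x * b))) := by
  have hx0 : 0 < x := by linarith
  have hb0 := hb.1
  have hD : 0 ≤ D := by simpa using (abs_nonneg _).trans (hh 1 (by simp))
  rw [abs_mul, Real.abs_exp]
  calc Real.exp (-(x * b)) * |h b|
      ≤ Real.exp (-(x * b)) * (D * (b ^ a *
          ((1 + Real.log x) * (1 + |Real.log (x * b)|)) ^ j)) := by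
        refine mul_le_mul_of_nonneg_left ((hh b hb).trans ?_) (Real.exp_pos _).le
        gcongr
        exact one_add_abs_log_le_mul hx hb0
    _ = _ := by
        rw [Real.mul_rpow hx0.le hb0.le, Real.rpow_neg hx0.le, mul_pow]
        field_simp

lemma integral_exp_neg_mul_isBigO (ha : -1 < a)
    (hh : ∀ b ∈ Set.Ioc (0 : ℝ) 1, |h b| ≤ D * (b ^ a * (1 + |Real.log b|) ^ j)) :
    (fun x : ℝ ↦ ∫ b in (0 : ℝ)..1, Real.exp (-(x * b)) * h b) =O[atTop]
      fun x ↦ x ^ (-(1 + a)) * Real.log x ^ j := by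
  set g : ℝ → ℝ := fun u ↦ (1 + |Real.log u|) ^ j * u ^ a * Real.exp (-u)
  have hg : IntegrableOn g (Set.Ioi 0) :=
    integrableOn_one_add_abs_log_pow_mul_rpow_mul_exp_neg j ha
  have hg0 : ∀ u ∈ Set.Ioi (0 : ℝ), 0 ≤ g u := fun u hu ↦ by
    have hu : 0 < u := hu
    positivity
  have hD : 0 ≤ D := by simpa using (abs_nonneg _).trans (hh 1 (by simp))
  refine .of_bound (D * 2 ^ j * ∫ u in Set.Ioi 0, g u) ?_
  filter_upwards [eventually_ge_atTop (Real.exp 1)] with x hx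
  have hx1 : 1 ≤ x := (Real.one_le_exp zero_le_one).trans hx
  have hx0 : 0 < x := by linarith
  have hlog : 1 ≤ Real.log x := (Real.le_log_iff_exp_le hx0).2 hx
  have hI : 0 ≤ ∫ u in Set.Ioi 0, g u := setIntegral_nonneg measurableSet_Ioi hg0
  set A := D * x ^ (-a) * (1 + Real.log x) ^ j with hA
  have hgx : IntegrableOn (fun b ↦ A * g (x * b)) (Set.Ioi 0) :=
    ((integrableOn_Ioi_comp_mul_left_iff g 0 hx0).2 (by rwa [mul_zero])).const_mul A
  have hA0 : 0 ≤ A := by positivity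
  calc ‖∫ b in (0 : ℝ)..1, Real.exp (-(x * b)) * h b‖
      ≤ ∫ b in Set.Ioc (0 : ℝ) 1, A * g (x * b) := by
        rw [intervalIntegral.integral_of_le zero_le_one]
        exact norm_integral_le_of_norm_le (hgx.mono_set Set.Ioc_subset_Ioi_self)
          ((ae_restrict_mem measurableSet_Ioc).mono fun b hb ↦ abs_exp_neg_mul_le hh hx1 hb)
    _ ≤ ∫ b in Set.Ioi (0 : ℝ), A * g (x * b) :=
        setIntegral_mono_set hgx ((ae_restrict_mem measurableSet_Ioi).mono fun b hb ↦
          mul_nonneg hA0 (hg0 _ (mul_pos hx0 hb))) Set.Ioc_subset_Ioi_self.eventuallyLE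
    _ = D * (1 + Real.log x) ^ j * (∫ u in Set.Ioi 0, g u) * x ^ (-(1 + a)) := by
        rw [integral_const_mul, integral_comp_mul_left_Ioi g 0 hx0, mul_zero, smul_eq_mul, hA,
          neg_add, Real.rpow_add hx0, Real.rpow_neg_one]
        ring
    _ ≤ D * (2 * Real.log x) ^ j * (∫ u in Set.Ioi 0, g u) * x ^ (-(1 + a)) := by
        gcongr
        linarith
    _ = _ := by
        rw [Real.norm_of_nonneg (by positivity), mul_pow]
        ring

end Watson

section Regularity

variable {θ : Fin 4 → ℝ}

lemma differentiableAt_psiExtDeriv (i : Fin 4) (θ : Fin 4 → ℝ) {v : ℂ}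
    (hv : v ∈ Complex.slitPlane) : DifferentiableAt ℂ (psiExtDeriv i θ) v := by
  have hL := (hasDerivAt_logScaled_right (θ 1) hv).differentiableAt
  have hK : DifferentiableAt ℂ (fun v ↦ skewKernel (θ 2 - 1) (logScaled (θ 1) v)) v :=
    (hasDerivAt_skewKernel_right _ _).differentiableAt.comp v hL
  have hQ : DifferentiableAt ℂ (fun v ↦ powKernel (θ 2 - 1) (logScaled (θ 1) v)) v :=
    (hasDerivAt_powKernel_right _ _).differentiableAt.comp v hL
  have hE : DifferentiableAt ℂ
      (fun v ↦ expQuot ((θ 2 - 1 : ℝ) * logScaled (θ 1) v)) v :=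
    (differentiable_expQuot _).comp v (hL.const_mul _)
  have hE' : DifferentiableAt ℂ
      (fun v ↦ deriv expQuot ((θ 2 - 1 : ℝ) * logScaled (θ 1) v)) v :=
    (differentiable_expQuot.analyticAt _).deriv.differentiableAt.comp v (hL.const_mul _)
  unfold psiExtDeriv realExponentDeriv branchExponentDeriv skewKernelDeriv
  fin_cases i <;>
    simp only [Fin.zero_eta, Fin.mk_one, Fin.reduceFinMk, Matrix.cons_val] <;> fun_prop

lemma mem_slitPlane_of_mem_halfStrip {v : ℂ} (hv : v ∈ halfStrip) (hv0 : v ≠ 0) :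
    v ∈ Complex.slitPlane := by
  rcases hv.1.1.eq_or_lt with hre | hre
  · exact .inr fun him ↦ hv0 (Complex.ext hre.symm him)
  · exact .inl hre

lemma continuousAt_zero_of_norm_le {g : ℂ → ℂ} {C r s : ℝ} (hr : 0 < r) (hs : 0 < s)
    (hg : ∀ v, ‖g v‖ ≤ C * (‖v‖ ^ r + ‖v‖ ^ s)) : ContinuousAt g 0 := by
  have hlim : Tendsto (fun v : ℂ ↦ C * (‖v‖ ^ r + ‖v‖ ^ s)) (𝓝 0) (𝓝 0) := by
    have hpow {t : ℝ} (ht : 0 < t) : ContinuousAt (fun v : ℂ ↦ ‖v‖ ^ t) 0 :=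
      continuousAt_id.norm.rpow_const (.inr ht.le)
    have hcont : ContinuousAt (fun v : ℂ ↦ C * (‖v‖ ^ r + ‖v‖ ^ s)) 0 :=
      ((hpow hr).add (hpow hs)).const_mul C
    simpa [ContinuousAt, Real.zero_rpow hr.ne', Real.zero_rpow hs.ne'] using hcont
  have hg0 : g 0 = 0 := by simpa [Real.zero_rpow hr.ne', Real.zero_rpow hs.ne'] using hg 0
  rw [ContinuousAt, hg0]
  exact squeeze_zero_norm hg hlim

lemma continuousOn_halfStrip_of_norm_le {g : ℂ → ℂ} {C r s : ℝ} (hr : 0 < r) (hs : 0 < s)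
    (hg : ∀ v, ‖g v‖ ≤ C * (‖v‖ ^ r + ‖v‖ ^ s))
    (hd : ∀ v ∈ Complex.slitPlane, DifferentiableAt ℂ g v) : ContinuousOn g halfStrip := by
  intro v hv
  rcases eq_or_ne v 0 with rfl | hv0
  · exact (continuousAt_zero_of_norm_le hr hs hg).continuousWithinAt
  · exact (hd v (mem_slitPlane_of_mem_halfStrip hv hv0)).continuousAt.continuousWithinAt

lemma continuousOn_psiExt (hθ : θ ∈ stableDomain) : ContinuousOn (psiExt θ) halfStrip := by
  obtain ⟨r, hr0, hr⟩ := exists_between (lt_min one_pos hθ.2.1)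
  obtain ⟨C, -, hbound⟩ := exists_norm_psiExt_le hθ hr (max_lt one_lt_two hθ.2.2)
  exact continuousOn_halfStrip_of_norm_le hr0 two_pos hbound
    fun _ hv ↦ (hasDerivAt_psiExt θ hv).differentiableAt

lemma continuousOn_psiExtDeriv (i : Fin 4) (hθ : θ ∈ stableDomain) :
    ContinuousOn (psiExtDeriv i θ) halfStrip := by
  obtain ⟨r, hr0, hr⟩ := exists_between (lt_min one_pos hθ.2.1)
  obtain ⟨C, -, hbound⟩ := exists_norm_psiExtDeriv_le i hθ hr (max_lt one_lt_two hθ.2.2)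
  exact continuousOn_halfStrip_of_norm_le hr0 two_pos hbound
    fun _ hv ↦ differentiableAt_psiExtDeriv i θ hv

lemma continuousOn_charDeriv (i : Fin 4) (k : ℕ) (hθ : θ ∈ stableDomain) :
    ContinuousOn (charDeriv i k θ) halfStrip :=
  (continuousOn_psiExt hθ).cexp.mul
    ((continuous_pow k).continuousOn.mul (continuousOn_psiExtDeriv i hθ))

lemma differentiableOn_charDeriv (i : Fin 4) (k : ℕ) (θ : Fin 4 → ℝ) :
    DifferentiableOn ℂ (charDeriv i k θ) Complex.slitPlane := fun _ hv ↦
  ((hasDerivAt_psiExt θ hv).differentiableAt.cexp.mul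
    ((differentiableAt_pow k).mul (differentiableAt_psiExtDeriv i θ hv))).differentiableWithinAt

end Regularity

section RealAxis

/-- The power of `log |x|` in the tail bound for the derivative in the `i`-th parameter: only the
derivative in the exponent `α`, the parameter of index `2`, produces a logarithm. -/
def logOrder (i : Fin 4) : ℕ := if i = 2 then 1 else 0

variable {θ : Fin 4 → ℝ} {b : ℝ}

lemma im_realExponent_ofReal (θ : Fin 4 → ℝ) (hb : 0 < b) : (realExponent θ b).im = 0 := by
  obtain ⟨y, hy⟩ := skewKernel_ofReal (θ 2 - 1) (Real.log (θ 1) + Real.log b)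
  rw [realExponent, logScaled_ofReal _ hb, hy]
  simp

lemma im_realExponentDeriv_ofReal (i : Fin 4) (hθ : θ ∈ stableDomain) (hb : 0 < b) :
    (realExponentDeriv i θ b).im = 0 := by
  have him := Complex.imCLM.hasFDerivAt.comp_hasDerivAt (θ i) (hasDerivAt_realExponent i hθ b)
  have hconst : Complex.imCLM ∘ (fun s ↦ realExponent (Function.update θ i s) b) = fun _ ↦ 0 :=
    funext fun s ↦ im_realExponent_ofReal _ hb
  rw [hconst] at him
  exact him.unique (hasDerivAt_const _ _)

lemma norm_mul_powKernel_logScaled (hσ : 0 < θ 1) (hb : 0 < b) :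
    ‖(θ 1 * b * powKernel (θ 2 - 1) (logScaled (θ 1) b) : ℂ)‖ = θ 1 ^ θ 2 * b ^ θ 2 := by
  rw [norm_mul, norm_powKernel, logScaled_ofReal _ hb, Complex.ofReal_re, ← Real.log_mul hσ.ne'
    hb.ne', ← Complex.ofReal_mul, Complex.norm_of_nonneg (by positivity),
    mul_exp_sub_one_mul_log (by positivity), Real.mul_rpow hσ.le hb.le]

lemma norm_branchExponent_ofReal (hσ : 0 < θ 1) (hb : 0 < b) :
    ‖branchExponent θ b‖ = |1 + θ 3| * θ 1 ^ θ 2 * b ^ θ 2 := by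
  rw [branchExponent, mul_assoc, norm_mul, norm_mul_powKernel_logScaled hσ hb, ← mul_assoc,
    ← Complex.ofReal_one, ← Complex.ofReal_add, Complex.norm_real, Real.norm_eq_abs]

lemma norm_logScaled_sub_half_pi_mul_I_le (σ b : ℝ) :
    ‖logScaled σ b - Real.pi / 2 * I‖ ≤
      2 * (1 + |Real.log σ| + Real.pi) * (1 + |Real.log b|) := by
  refine (norm_sub_half_pi_mul_I_le _).trans ?_
  have hlog := one_add_norm_logScaled_le σ b
  rw [Complex.norm_real, Real.norm_eq_abs, Real.log_abs] at hlog
  linarith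

lemma exists_norm_branchExponentDeriv_ofReal_le (i : Fin 4) (hσ : 0 < θ 1) :
    ∃ C, 0 ≤ C ∧ ∀ b : ℝ, 0 < b →
      ‖branchExponentDeriv i θ b‖ ≤ C * (b ^ θ 2 * (1 + |Real.log b|) ^ logOrder i) := by
  have hσ' : (θ 1 : ℂ) ≠ 0 := Complex.ofReal_ne_zero.2 hσ.ne'
  suffices h : ∃ (C : ℝ) (c : ℝ → ℂ), 0 ≤ C ∧
      (∀ b : ℝ, branchExponentDeriv i θ b =
        c b * (θ 1 * b * powKernel (θ 2 - 1) (logScaled (θ 1) b))) ∧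
      ∀ b, ‖c b‖ ≤ C * (1 + |Real.log b|) ^ logOrder i by
    obtain ⟨C, c, hC, hfactor, hc⟩ := h
    refine ⟨C * θ 1 ^ θ 2, by positivity, fun b hb ↦ ?_⟩
    rw [hfactor, norm_mul, norm_mul_powKernel_logScaled hσ hb]
    calc ‖c b‖ * (θ 1 ^ θ 2 * b ^ θ 2)
        ≤ C * (1 + |Real.log b|) ^ logOrder i * (θ 1 ^ θ 2 * b ^ θ 2) := by
          gcongr
          exact hc b
      _ = _ := by ring
  fin_cases i
  · exact ⟨0, fun _ ↦ 0, le_rfl, by simp [branchExponentDeriv], by simp⟩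
  · refine ⟨‖((1 + θ 3) * θ 2 / θ 1 : ℂ)‖, fun _ ↦ (1 + θ 3) * θ 2 / θ 1, norm_nonneg _,
      fun b ↦ ?_, fun b ↦ by simp [logOrder]⟩
    simp only [branchExponentDeriv, Fin.mk_one, Matrix.cons_val_one, Matrix.cons_val_zero]
    field_simp
  · refine ⟨‖(1 + θ 3 : ℂ)‖ * (2 * (1 + |Real.log (θ 1)| + Real.pi)),
      fun b ↦ (1 + θ 3) * (logScaled (θ 1) b - Real.pi / 2 * I), by positivity, fun b ↦ ?_,
      fun b ↦ ?_⟩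
    · simp only [branchExponentDeriv, Fin.reduceFinMk, Matrix.cons_val]
      ring
    · rw [norm_mul, mul_assoc]
      gcongr
      simpa [logOrder] using norm_logScaled_sub_half_pi_mul_I_le (θ 1) b
  · exact ⟨1, fun _ ↦ 1, zero_le_one, by simp [branchExponentDeriv], by simp [logOrder]⟩

lemma abs_im_exp_add_mul_add_le {A A' : ℂ} (hA : A.im = 0) (hA' : A'.im = 0) (B B' : ℂ) :
    |(Complex.exp (A + B) * (A' + B')).im| ≤
      Real.exp (‖A‖ + ‖B‖) * (‖A'‖ * ‖B‖ + ‖B'‖) := by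
  lift A to ℝ using hA
  lift A' to ℝ using hA'
  have hreal : (Complex.exp (A + B) * (A' + B')).im =
      (Complex.exp A * (A' * (Complex.exp B - 1)) + Complex.exp (A + B) * B').im := by
    have hsplit : Complex.exp (A + B) * (A' + B') = Complex.exp A * (A' * (Complex.exp B - 1)) +
        Complex.exp (A + B) * B' + (Real.exp A * A' : ℝ) := by
      push_cast [Complex.exp_add]
      ring
    rw [hsplit, Complex.add_im _ (Complex.ofReal _), Complex.ofReal_im, add_zero]
  have hsub : ‖Complex.exp B - 1‖ ≤ ‖B‖ * Real.exp ‖B‖ := by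
    simpa using Complex.norm_exp_sub_sum_le_norm_mul_exp B 1
  rw [hreal]
  refine (Complex.abs_im_le_norm _).trans ((norm_add_le _ _).trans ?_)
  rw [norm_mul, norm_mul, norm_mul]
  calc ‖Complex.exp A‖ * (‖(A' : ℂ)‖ * ‖Complex.exp B - 1‖) + ‖Complex.exp (A + B)‖ * ‖B'‖
      ≤ Real.exp ‖(A : ℂ)‖ * (‖(A' : ℂ)‖ * (‖B‖ * Real.exp ‖B‖)) +
          Real.exp (‖(A : ℂ)‖ + ‖B‖) * ‖B'‖ := by
        gcongr
        · exact Complex.norm_exp_le_exp_norm _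
        · exact (Complex.norm_exp_le_exp_norm _).trans (Real.exp_le_exp.2 (norm_add_le _ _))
    _ = _ := by rw [Real.exp_add]; ring

end RealAxis

section OneSidedTail

variable {θ : Fin 4 → ℝ}

lemma exists_norm_le_on_Ioc_of_isBigO_psiMajorant (hθ : θ ∈ stableDomain)
    {F : (Fin 4 → ℝ) × ℂ → ℂ} (hF : F =O[𝓝 θ ×ˢ ⊤] fun p ↦ psiMajorant p.1 p.2) :
    ∃ C > 0, ∀ b ∈ Set.Ioc (0 : ℝ) 1, ‖F (θ, b)‖ ≤ C := by
  obtain ⟨C, hC, h⟩ := exists_norm_le_of_isBigO_psiMajorant hθ hF (r := 0) (s := 2)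
    (lt_min one_pos hθ.2.1) (max_lt one_lt_two hθ.2.2)
  refine ⟨C * (1 + 1), by positivity, fun b hb ↦ (h b).trans ?_⟩
  rw [Real.rpow_zero, Real.rpow_two, Complex.norm_of_nonneg hb.1.le]
  gcongr
  exact pow_le_one₀ hb.1.le hb.2

-- With `ψ = A + B`, `A` and `∂A` real on `(0, ∞)`, the real term `exp A * ∂A` drops out, and what
-- is left carries a factor `b ^ α` from `B` or `∂B`.
lemma exists_abs_im_charDeriv_le (i : Fin 4) (k : ℕ) (hθ : θ ∈ stableDomain) :
    ∃ D, ∀ b ∈ Set.Ioc (0 : ℝ) 1, |(charDeriv i k θ b).im| ≤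
      D * (b ^ (k + θ 2) * (1 + |Real.log b|) ^ logOrder i) := by
  obtain ⟨C₁, -, hA⟩ :=
    exists_norm_le_on_Ioc_of_isBigO_psiMajorant hθ (realExponent_isBigO hθ)
  obtain ⟨C₂, hC₂, hA'⟩ :=
    exists_norm_le_on_Ioc_of_isBigO_psiMajorant hθ (realExponentDeriv_isBigO i hθ)
  obtain ⟨C₃, -, hB'⟩ := exists_norm_branchExponentDeriv_ofReal_le i hθ.1
  set K := |1 + θ 3| * θ 1 ^ θ 2
  have hK : 0 ≤ K := mul_nonneg (abs_nonneg _) (Real.rpow_nonneg hθ.1.le _)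
  refine ⟨Real.exp (C₁ + K) * (C₂ * K + C₃), fun b hb ↦ ?_⟩
  have hb0 := hb.1
  set ℓ := (1 + |Real.log b|) ^ logOrder i
  have hℓ : 1 ≤ ℓ := one_le_pow₀ (le_add_of_nonneg_right (abs_nonneg _))
  have hB : ‖branchExponent θ b‖ ≤ K * (b ^ θ 2 * ℓ) := by
    rw [norm_branchExponent_ofReal hθ.1 hb0]
    gcongr
    exact le_mul_of_one_le_right (by positivity) hℓ
  have hB₁ : ‖branchExponent θ b‖ ≤ K := by
    rw [norm_branchExponent_ofReal hθ.1 hb0]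
    exact mul_le_of_le_one_right hK (Real.rpow_le_one hb0.le hb.2 hθ.2.1.le)
  have him : (charDeriv i k θ b).im = b ^ k * (Complex.exp (realExponent θ b +
      branchExponent θ b) * (realExponentDeriv i θ b + branchExponentDeriv i θ b)).im := by
    rw [charDeriv, mul_left_comm, ← Complex.ofReal_pow, Complex.im_ofReal_mul, psiExt, psiExtDeriv]
  rw [him, abs_mul, abs_of_nonneg (by positivity)]
  calc _ ≤ b ^ k * (Real.exp (C₁ + K) * (C₂ * (K * (b ^ θ 2 * ℓ)) + C₃ * (b ^ θ 2 * ℓ))) := by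
        refine mul_le_mul_of_nonneg_left ((abs_im_exp_add_mul_add_le
          (im_realExponent_ofReal θ hb0) (im_realExponentDeriv_ofReal i hθ hb0) _ _).trans ?_)
          (by positivity)
        gcongr
        exacts [hA b hb, hA' b hb, hB' b hb0]
    _ = _ := by
        rw [Real.rpow_add hb0, Real.rpow_natCast]
        ring

lemma exp_neg_isBigO_rpow_mul_log_pow (s : ℝ) (j : ℕ) :
    (fun x ↦ Real.exp (-x)) =O[atTop] fun x ↦ x ^ s * Real.log x ^ j := by
  have hlog : (fun _ ↦ (1 : ℝ)) =O[atTop] fun x ↦ Real.log x ^ j := by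
    refine .of_bound 1 ?_
    filter_upwards [Real.tendsto_log_atTop.eventually_ge_atTop 1] with x hx
    simpa [abs_of_nonneg (zero_le_one.trans hx)] using one_le_pow₀ (n := j) hx
  simpa using (isLittleO_exp_neg_mul_rpow_atTop one_pos s).isBigO.mul hlog

lemma re_axisLaplace_charDeriv_isBigO (i : Fin 4) (k : ℕ) (hθ : θ ∈ stableDomain) :
    (fun x ↦ (axisLaplace (charDeriv i k θ) x).re) =O[atTop]
      fun x ↦ x ^ (-(1 + (k + θ 2))) * Real.log x ^ logOrder i := by
  obtain ⟨C, -, hstrip⟩ := exists_norm_charDeriv_le i k hθ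
  obtain ⟨D, him⟩ := exists_abs_im_charDeriv_le i k hθ
  have hα : 0 < k + θ 2 := add_pos_of_nonneg_of_pos k.cast_nonneg hθ.2.1
  have hdiff : DifferentiableOn ℂ (charDeriv i k θ) (Set.Ioo 0 1 ×ℂ Set.Ioi 0) :=
    (differentiableOn_charDeriv i k θ).mono fun v hv ↦ .inl hv.1.1
  have hbound : (fun x ↦ (axisLaplace (charDeriv i k θ) x).re) =O[atTop] fun x ↦
      C * (Real.pi / 2) * Real.exp (-x) +
        ‖∫ b in (0 : ℝ)..1, Real.exp (-(x * b)) * (charDeriv i k θ b).im‖ :=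
    .of_bound 1 <| (eventually_ge_atTop 0).mono fun x hx ↦ by
      rw [one_mul]
      exact (abs_re_axisLaplace_le (continuousOn_charDeriv i k hθ) hdiff hstrip hx).trans
        (le_abs_self _)
  exact hbound.trans (((exp_neg_isBigO_rpow_mul_log_pow _ _).const_mul_left _).add
    (integral_exp_neg_mul_isBigO (by linarith) him).norm_left)

end OneSidedTail

section Differentiation

variable {G : ℂ → ℂ} {x : ℝ}

lemma norm_exp_neg_mul_mul_I_mul (x y : ℝ) (z : ℂ) :
    ‖Complex.exp (-(x * (y * I))) * z‖ = ‖z‖ := by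
  rw [norm_mul, Complex.norm_exp]
  simp

lemma integrableOn_exp_neg_mul_mul_I_mul {g : ℝ → ℂ} (hg : IntegrableOn g (Set.Ioi 0)) (x : ℝ) :
    IntegrableOn (fun y : ℝ ↦ Complex.exp (-(x * (y * I))) * g y) (Set.Ioi 0) :=
  hg.congr' (.mul (by fun_prop) hg.aestronglyMeasurable)
    (.of_forall fun y ↦ (norm_exp_neg_mul_mul_I_mul x y (g y)).symm)

lemma hasDerivAt_axisLaplace (hG : IntegrableOn (fun y : ℝ ↦ G (y * I)) (Set.Ioi 0))
    (hG' : IntegrableOn (fun y : ℝ ↦ y * I * G (y * I)) (Set.Ioi 0)) (x : ℝ) :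
    HasDerivAt (axisLaplace G) (-axisLaplace (fun v ↦ v * G v) x) x := by
  have h := hasDerivAt_integral_of_dominated_loc_of_deriv_le
    (μ := volume.restrict (Set.Ioi (0 : ℝ)))
    (F := fun (x y : ℝ) ↦ Complex.exp (-(x * (y * I))) * G (y * I))
    (F' := fun (x y : ℝ) ↦ -(Complex.exp (-(x * (y * I))) * (y * I * G (y * I))))
    (bound := fun y ↦ ‖y * I * G (y * I)‖) (x₀ := x) univ_mem
    (.of_forall fun x ↦ (integrableOn_exp_neg_mul_mul_I_mul hG x).aestronglyMeasurable)
    (integrableOn_exp_neg_mul_mul_I_mul hG x)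
    (integrableOn_exp_neg_mul_mul_I_mul hG' x).aestronglyMeasurable.neg
    (.of_forall fun y x _ ↦ by rw [norm_neg, norm_exp_neg_mul_mul_I_mul]) hG'.norm
    (.of_forall fun y x _ ↦ ?_)
  · exact h.2.congr_deriv (integral_neg _)
  · have hexp : HasDerivAt (fun x : ℝ ↦ -((x : ℂ) * (y * I))) (-(1 * (y * I))) x :=
      ((hasDerivAt_id x).ofReal_comp.mul_const _).neg
    exact (hexp.cexp.mul_const _).congr_deriv (by ring)

lemma hasDerivAt_axisLaplace_param {G G' : ℝ → ℂ → ℂ} {s₀ C : ℝ}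
    (hG : ∀ᶠ s in 𝓝 s₀, IntegrableOn (fun y : ℝ ↦ G s (y * I)) (Set.Ioi 0))
    (hG' : IntegrableOn (fun y : ℝ ↦ G' s₀ (y * I)) (Set.Ioi 0))
    (hbound : ∀ᶠ s in 𝓝 s₀, ∀ y : ℝ, 0 < y → ‖G' s (y * I)‖ ≤ C * (1 + y ^ 2)⁻¹)
    (hderiv : ∀ᶠ s in 𝓝 s₀, ∀ v, HasDerivAt (fun s ↦ G s v) (G' s v) s) (x : ℝ) :
    HasDerivAt (fun s ↦ axisLaplace (G s) x) (axisLaplace (G' s₀) x) s₀ := by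
  refine (hasDerivAt_integral_of_dominated_loc_of_deriv_le (μ := volume.restrict (Set.Ioi (0 : ℝ)))
    (F := fun (s y : ℝ) ↦ Complex.exp (-(x * (y * I))) * G s (y * I))
    (F' := fun (s y : ℝ) ↦ Complex.exp (-(x * (y * I))) * G' s (y * I))
    (bound := fun y ↦ C * (1 + y ^ 2)⁻¹) (hbound.and hderiv)
    (hG.mono fun s hs ↦ (integrableOn_exp_neg_mul_mul_I_mul hs x).aestronglyMeasurable)
    (integrableOn_exp_neg_mul_mul_I_mul hG.self_of_nhds x)
    (integrableOn_exp_neg_mul_mul_I_mul hG' x).aestronglyMeasurable ?_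
    (integrable_inv_one_add_sq.const_mul C).integrableOn
    (.of_forall fun y s hs ↦ (hs.2 _).const_mul _)).2
  filter_upwards [ae_restrict_mem measurableSet_Ioi] with y hy s hs
  rw [norm_exp_neg_mul_mul_I_mul]
  exact hs.1 y hy

variable {θ : Fin 4 → ℝ}

lemma integrableOn_exp_psiExt_mul_pow (k : ℕ) (hθ : θ ∈ stableDomain) :
    IntegrableOn (fun y : ℝ ↦ Complex.exp (psiExt θ (y * I)) * (y * I) ^ k) (Set.Ioi 0) := by
  obtain ⟨C, -, hbound⟩ :=
    exists_eventually_norm_exp_psiExt_mul_le hθ (pow_isBigO_one_add_norm_pow (le_refl k) _)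
  refine (integrable_inv_one_add_sq.const_mul C).integrableOn.mono' ?_
    ((ae_restrict_mem measurableSet_Ioi).mono hbound.self_of_nhds)
  have hpsi : ContinuousOn (fun y : ℝ ↦ psiExt θ (y * I)) (Set.Ioi 0) :=
    (continuousOn_psiExt hθ).comp (by fun_prop) fun y hy ↦ by
      simpa using ofReal_add_mul_I_mem_halfStrip (Set.left_mem_Icc.2 zero_le_one)
        (Set.mem_Ioi.1 hy).le
  exact (hpsi.cexp.mul (by fun_prop)).aestronglyMeasurable measurableSet_Ioi

lemma integrableOn_charDeriv (i : Fin 4) (k : ℕ) (hθ : θ ∈ stableDomain) :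
    IntegrableOn (fun y : ℝ ↦ charDeriv i k θ (y * I)) (Set.Ioi 0) := by
  obtain ⟨C, -, hbound⟩ := exists_norm_charDeriv_le i k hθ
  simpa using integrableOn_vertical_of_norm_le (continuousOn_charDeriv i k hθ) hbound
    (Set.left_mem_Icc.2 zero_le_one)

lemma tendsto_update (θ : Fin 4 → ℝ) (i : Fin 4) :
    Tendsto (Function.update θ i) (𝓝 (θ i)) (𝓝 θ) := by
  simpa using (continuous_const.update i continuous_id : Continuous (Function.update θ i)).tendsto
    (θ i)

lemma hasDerivAt_axisLaplace_exp_psiExt_mul_pow (i : Fin 4) (k : ℕ) (hθ : θ ∈ stableDomain)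
    (x : ℝ) :
    HasDerivAt
      (fun s ↦ axisLaplace (fun v ↦ Complex.exp (psiExt (Function.update θ i s) v) * v ^ k) x)
      (axisLaplace (charDeriv i k θ) x) (θ i) := by
  obtain ⟨C, -, hbound⟩ :=
    exists_eventually_norm_exp_psiExt_mul_le hθ (pow_mul_psiExtDeriv_isBigO i k hθ)
  have hdomain : ∀ᶠ s in 𝓝 (θ i), Function.update θ i s ∈ stableDomain :=
    (tendsto_update θ i).eventually (isOpen_stableDomain.mem_nhds hθ)
  simpa only [Function.update_eq_self] using hasDerivAt_axisLaplace_param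
    (G' := fun s ↦ charDeriv i k (Function.update θ i s))
    (hdomain.mono fun s hs ↦ integrableOn_exp_psiExt_mul_pow k hs)
    (by simpa using integrableOn_charDeriv i k hθ) ((tendsto_update θ i).eventually hbound)
    (hdomain.mono fun s hs v ↦ by
      have hpsi := hasDerivAt_psiExt_param i hs v
      simp only [Function.update_idem, Function.update_self] at hpsi
      exact (hpsi.cexp.mul_const (v ^ k)).congr_deriv (by rw [charDeriv]; ring)) x

end Differentiation

section Density

lemma integrable_of_conj_of_integrableOn_Ioi {f : ℝ → ℂ} (hf : ∀ t, f (-t) = starRingEnd ℂ (f t))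
    (hint : IntegrableOn f (Set.Ioi 0)) : Integrable f := by
  have hIio : IntegrableOn f (Set.Iio 0) := by
    have hconj : IntegrableOn (fun t ↦ starRingEnd ℂ (f t)) (Set.Ioi (-0)) := by
      rw [neg_zero]
      exact Complex.conjCLE.toContinuousLinearMap.integrable_comp hint
    simpa [hf] using hconj.comp_neg_Iio
  rw [← integrableOn_univ, ← Set.Iio_union_Ici (a := (0 : ℝ))]
  exact hIio.union ((integrableOn_Ici_iff_integrableOn_Ioi (by simp)).2 hint)

lemma re_integral_eq_two_mul_re_integral_Ioi {f : ℝ → ℂ}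
    (hf : ∀ t, f (-t) = starRingEnd ℂ (f t)) (hint : IntegrableOn f (Set.Ioi 0)) :
    (∫ t, f t).re = 2 * (∫ t in Set.Ioi 0, f t).re := by
  have habs (t : ℝ) : (f t).re = (f |t|).re := by
    rcases abs_choice t with h | h
    · rw [h]
    · rw [h, hf, Complex.conj_re]
  calc (∫ t, f t).re = ∫ t, (f t).re :=
        (Complex.reCLM.integral_comp_comm (integrable_of_conj_of_integrableOn_Ioi hf hint)).symm
    _ = ∫ t, (f |t|).re := integral_congr_ae (.of_forall habs)
    _ = 2 * ∫ t in Set.Ioi 0, (f t).re := integral_comp_abs (f := fun t ↦ (f t).re)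
    _ = 2 * (∫ t in Set.Ioi 0, f t).re :=
        congrArg (2 * ·) (Complex.reCLM.integral_comp_comm hint)

variable {θ : Fin 4 → ℝ}

lemma fM_eq_re_axisLaplace (hθ : θ ∈ stableDomain) (x : ℝ) :
    fM θ x = 1 / Real.pi * (axisLaplace (fun v ↦ Complex.exp (psiExt θ v) * v ^ 0) x).re := by
  set f : ℝ → ℂ := fun t ↦ Complex.exp (-I * t * x) * phiM θ t with hf
  have hconj (t : ℝ) : f (-t) = starRingEnd ℂ (f t) := by
    simp only [hf, phiM, psiM_neg, map_mul, ← Complex.exp_conj, map_neg, Complex.conj_ofReal,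
      Complex.conj_I, Complex.ofReal_neg]
    ring_nf
  have haxis : Set.EqOn (fun y : ℝ ↦ Complex.exp (-(x * (y * I))) *
      (Complex.exp (psiExt θ (y * I)) * (y * I) ^ 0)) f (Set.Ioi 0) := fun y hy ↦ by
    simp only [hf, phiM, pow_zero, mul_one, psiM_eq_psiExt hθ hy]
    ring_nf
  have hint : IntegrableOn f (Set.Ioi 0) :=
    (integrableOn_exp_neg_mul_mul_I_mul (integrableOn_exp_psiExt_mul_pow 0 hθ) x).congr_fun haxis
      measurableSet_Ioi
  rw [fM, re_integral_eq_two_mul_re_integral_Ioi hconj hint, axisLaplace,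
    ← setIntegral_congr_fun measurableSet_Ioi haxis]
  ring

lemma hasDerivAt_re_axisLaplace_exp_psiExt_mul_pow (i : Fin 4) (k : ℕ) (hθ : θ ∈ stableDomain)
    (x : ℝ) :
    HasDerivAt (fun s ↦ 1 / Real.pi *
        (axisLaplace (fun v ↦ Complex.exp (psiExt (Function.update θ i s) v) * v ^ k) x).re)
      (1 / Real.pi * (axisLaplace (charDeriv i k θ) x).re) (θ i) :=
  (Complex.reCLM.hasFDerivAt.comp_hasDerivAt (θ i)
    (hasDerivAt_axisLaplace_exp_psiExt_mul_pow i k hθ x)).const_mul _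

lemma eventually_update_mem_stableDomain (i : Fin 4) (hθ : θ ∈ stableDomain) :
    ∀ᶠ s in 𝓝 (θ i), Function.update θ i s ∈ stableDomain :=
  (tendsto_update θ i).eventually (isOpen_stableDomain.mem_nhds hθ)

lemma fP_eq_re_axisLaplace (i : Fin 4) (hθ : θ ∈ stableDomain) (x : ℝ) :
    fP i θ x = 1 / Real.pi * (axisLaplace (charDeriv i 0 θ) x).re :=
  ((hasDerivAt_re_axisLaplace_exp_psiExt_mul_pow i 0 hθ x).congr_of_eventuallyEq <|
    (eventually_update_mem_stableDomain i hθ).mono fun _ hs ↦ fM_eq_re_axisLaplace hs x).deriv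

lemma charDeriv_zero_zero (θ : Fin 4 → ℝ) :
    charDeriv 0 0 θ = fun v ↦ Complex.exp (psiExt θ v) * v ^ 1 := by
  ext v
  simp [charDeriv, psiExtDeriv, realExponentDeriv, branchExponentDeriv]

lemma fPP_zero_eq_re_axisLaplace (i : Fin 4) (hθ : θ ∈ stableDomain) (x : ℝ) :
    fPP 0 i θ x = 1 / Real.pi * (axisLaplace (charDeriv i 1 θ) x).re := by
  refine ((hasDerivAt_re_axisLaplace_exp_psiExt_mul_pow i 1 hθ x).congr_of_eventuallyEq <|
    (eventually_update_mem_stableDomain i hθ).mono fun s hs ↦ ?_).deriv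
  rw [fP_eq_re_axisLaplace 0 hs, charDeriv_zero_zero]

lemma fPX_eq_re_axisLaplace (i : Fin 4) (hθ : θ ∈ stableDomain) (x : ℝ) :
    fPX i θ x = -(1 / Real.pi * (axisLaplace (charDeriv i 1 θ) x).re) := by
  have hmul : (fun v ↦ v * charDeriv i 0 θ v) = charDeriv i 1 θ := by
    ext v
    simp only [charDeriv]
    ring
  have hderiv : HasDerivAt (axisLaplace (charDeriv i 0 θ))
      (-axisLaplace (charDeriv i 1 θ) x) x := by
    rw [← hmul]
    exact hasDerivAt_axisLaplace (integrableOn_charDeriv i 0 hθ)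
      (by simpa only [← hmul] using integrableOn_charDeriv i 1 hθ) x
  have hre := (Complex.reCLM.hasFDerivAt.comp_hasDerivAt x hderiv).const_mul (1 / Real.pi)
  rw [fPX, funext (fP_eq_re_axisLaplace i hθ)]
  exact hre.deriv.trans (by simp)

lemma fPX_eq_neg_fPP (i : Fin 4) (hθ : θ ∈ stableDomain) (x : ℝ) :
    fPX i θ x = -fPP 0 i θ x := by
  rw [fPX_eq_re_axisLaplace i hθ, fPP_zero_eq_re_axisLaplace i hθ]

lemma fP_isBigO_atTop (i : Fin 4) (hθ : θ ∈ stableDomain) :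
    fP i θ =O[atTop] fun x ↦ x ^ (-(1 + θ 2)) * Real.log x ^ logOrder i := by
  rw [funext (fP_eq_re_axisLaplace i hθ)]
  simpa using (re_axisLaplace_charDeriv_isBigO i 0 hθ).const_mul_left (1 / Real.pi)

lemma fPX_isBigO_atTop (i : Fin 4) (hθ : θ ∈ stableDomain) :
    fPX i θ =O[atTop] fun x ↦ x ^ (-(2 + θ 2)) * Real.log x ^ logOrder i := by
  rw [funext (fPX_eq_re_axisLaplace i hθ), show 2 + θ 2 = 1 + ((1 : ℕ) + θ 2) by push_cast; ring]
  exact ((re_axisLaplace_charDeriv_isBigO i 1 hθ).const_mul_left (1 / Real.pi)).neg_left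

end Density

section Reflection

/-- The signs with which `(μ, σ, α, β)` transform when the stable law of `X` is replaced by that
of `-X`; the new parameter is the pointwise product `reflectSign * θ`. -/
def reflectSign : Fin 4 → ℝ := ![-1, 1, 1, -1]

lemma reflectSign_mul_update (θ : Fin 4 → ℝ) (i : Fin 4) (s : ℝ) :
    reflectSign * Function.update θ i s =
      Function.update (reflectSign * θ) i (reflectSign i * s) := by
  ext j
  rcases eq_or_ne j i with rfl | h <;> simp [*]

lemma reflectSign_mul_mem_stableDomain {θ : Fin 4 → ℝ} (hθ : θ ∈ stableDomain) :
    reflectSign * θ ∈ stableDomain := by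
  simpa [stableDomain, reflectSign] using hθ

lemma psiM_reflectSign_mul (θ : Fin 4 → ℝ) (t : ℝ) : psiM (reflectSign * θ) t = psiM θ (-t) := by
  rw [psiM_neg]
  simp only [psiM, reflectSign, Pi.mul_apply, Matrix.cons_val, one_mul, neg_mul, mul_neg]
  split_ifs with h
  · simp only [map_add, map_sub, map_mul, Complex.conj_ofReal, Complex.conj_I]
    push_cast
    ring
  · simp only [map_add, map_mul, map_one, Complex.conj_ofReal, Complex.conj_I]
    push_cast
    ring

lemma fM_reflectSign_mul (θ : Fin 4 → ℝ) (x : ℝ) : fM (reflectSign * θ) x = fM θ (-x) := by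
  rw [fM, fM, ← integral_neg_eq_self]
  simp [phiM, psiM_reflectSign_mul]

lemma fP_neg (i : Fin 4) (θ : Fin 4 → ℝ) (x : ℝ) :
    fP i θ (-x) = reflectSign i * fP i (reflectSign * θ) x := by
  have hfM : (fun s ↦ fM (Function.update θ i s) (-x)) =
      fun s ↦ fM (Function.update (reflectSign * θ) i (reflectSign i * s)) x := by
    ext s
    rw [← reflectSign_mul_update, fM_reflectSign_mul]
  rw [fP, hfM, deriv_comp_mul_left _ fun u ↦ fM (Function.update (reflectSign * θ) i u) x,
    smul_eq_mul, fP, Pi.mul_apply]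

lemma fPX_neg (i : Fin 4) (θ : Fin 4 → ℝ) (x : ℝ) :
    fPX i θ (-x) = -(reflectSign i * fPX i (reflectSign * θ) x) := by
  rw [fPX, eq_neg_iff_add_eq_zero, ← neg_eq_iff_add_eq_zero, ← deriv_comp_neg,
    funext (fP_neg i θ), deriv_const_mul_field, fPX]

lemma isBigOAtInfty_of_isBigO_atTop {f r : ℝ → ℝ} (hf : f =O[atTop] r)
    (hneg : (fun x ↦ f (-x)) =O[atTop] r) (hr : ∀ᶠ x in atTop, 0 ≤ r x) :
    IsBigOAtInfty f fun x ↦ r |x| := by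
  obtain ⟨c, hc, hright⟩ := hf.exists_pos
  obtain ⟨d, hd, hleft⟩ := hneg.exists_pos
  have hboth : ∀ᶠ x in atTop, |f x| ≤ (c + d) * r x ∧ |f (-x)| ≤ (c + d) * r x := by
    filter_upwards [hright.bound, hleft.bound, hr] with x hfx hfnx hrx
    rw [Real.norm_of_nonneg hrx] at hfx hfnx
    rw [add_mul]
    exact ⟨hfx.trans (le_add_of_nonneg_right (by positivity)),
      hfnx.trans (le_add_of_nonneg_left (by positivity))⟩
  obtain ⟨M, hM⟩ := eventually_atTop.1 hboth
  refine ⟨c + d, by positivity, max M 1, by positivity, fun x hx ↦ ?_⟩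
  have habs := hM |x| ((le_max_left M 1).trans hx)
  rcases abs_choice x with h | h
  · simpa only [h] using habs.1
  · simpa only [h, neg_neg] using habs.2

variable {θ : Fin 4 → ℝ}

lemma eventually_rpow_mul_log_pow_nonneg (s : ℝ) (j : ℕ) :
    ∀ᶠ x in atTop, 0 ≤ x ^ s * Real.log x ^ j := by
  filter_upwards [eventually_ge_atTop 1] with x hx
  have := Real.log_nonneg hx
  positivity

lemma isBigOAtInfty_fP (i : Fin 4) (hθ : θ ∈ stableDomain) :
    IsBigOAtInfty (fP i θ) fun x ↦ |x| ^ (-(1 + θ 2)) * Real.log |x| ^ logOrder i :=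
  isBigOAtInfty_of_isBigO_atTop (fP_isBigO_atTop i hθ)
    (by
      simp only [fP_neg]
      simpa [reflectSign] using
        (fP_isBigO_atTop i (reflectSign_mul_mem_stableDomain hθ)).const_mul_left (reflectSign i))
    (eventually_rpow_mul_log_pow_nonneg _ _)

lemma isBigOAtInfty_fPX (i : Fin 4) (hθ : θ ∈ stableDomain) :
    IsBigOAtInfty (fPX i θ) fun x ↦ |x| ^ (-(2 + θ 2)) * Real.log |x| ^ logOrder i :=
  isBigOAtInfty_of_isBigO_atTop (fPX_isBigO_atTop i hθ)
    (by
      simp only [fPX_neg]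
      simpa [reflectSign] using
        ((fPX_isBigO_atTop i (reflectSign_mul_mem_stableDomain hθ)).const_mul_left
          (reflectSign i)).neg_left)
    (eventually_rpow_mul_log_pow_nonneg _ _)

end Reflection

end

end StableDensity

open StableDensity in
theorem density_first_deriv_tail_bounds_general (θ : Fin 4 → ℝ) (hσ : 0 < θ 1)
    (hα : θ 2 ∈ Set.Ioo (0 : ℝ) 2) :
    IsBigOAtInfty (fP 1 θ) (fun x ↦ |x| ^ (-(1 + θ 2))) ∧
    IsBigOAtInfty (fP 2 θ) (fun x ↦ |x| ^ (-(1 + θ 2)) * Real.log |x|) ∧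
    IsBigOAtInfty (fP 3 θ) (fun x ↦ |x| ^ (-(1 + θ 2))) ∧
    ((∀ x : ℝ, fPX 1 θ x = -fPP 0 1 θ x) ∧
      IsBigOAtInfty (fPX 1 θ) (fun x ↦ |x| ^ (-(2 + θ 2)))) ∧
    ((∀ x : ℝ, fPX 2 θ x = -fPP 0 2 θ x) ∧
      IsBigOAtInfty (fPX 2 θ) (fun x ↦ |x| ^ (-(2 + θ 2)) * Real.log |x|)) ∧
    ((∀ x : ℝ, fPX 3 θ x = -fPP 0 3 θ x) ∧
      IsBigOAtInfty (fPX 3 θ) (fun x ↦ |x| ^ (-(2 + θ 2)))) := by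
  have hθ : θ ∈ stableDomain := ⟨hσ, hα⟩
  have hfP (i : Fin 4) := isBigOAtInfty_fP i hθ
  have hfPX (i : Fin 4) := isBigOAtInfty_fPX i hθ
  have hμ (i : Fin 4) (x : ℝ) := fPX_eq_neg_fPP i hθ x
  refine ⟨?_, ?_, ?_, ⟨hμ 1, ?_⟩, ⟨hμ 2, ?_⟩, ⟨hμ 3, ?_⟩⟩
  · simpa [logOrder] using hfP 1
  · simpa [logOrder] using hfP 2
  · simpa [logOrder] using hfP 3
  · simpa [logOrder] using hfPX 1
  · simpa [logOrder] using hfPX 2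
  · simpa [logOrder] using hfPX 3

/-- Tail behavior of the first-order parameter derivatives of the density:
`f_σ = O(|x|^{-(1+α)})`, `f_α = O(|x|^{-(1+α)} log|x|)`, `f_β = O(|x|^{-(1+α)})`,
`f_σ' = -f_{μσ} = O(|x|^{-(2+α)})`, `f_α' = -f_{μα} = O(|x|^{-(2+α)} log|x|)`,
`f_β' = -f_{μβ} = O(|x|^{-(2+α)})`. -/
theorem density_first_deriv_tail_bounds (θ : Fin 4 → ℝ) (hθ : θ ∈ ThetaInt) :
    IsBigOAtInfty (fP 1 θ) (fun x => |x| ^ (-(1 + θ 2))) ∧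
    IsBigOAtInfty (fP 2 θ) (fun x => |x| ^ (-(1 + θ 2)) * Real.log |x|) ∧
    IsBigOAtInfty (fP 3 θ) (fun x => |x| ^ (-(1 + θ 2))) ∧
    ((∀ x : ℝ, fPX 1 θ x = -fPP 0 1 θ x) ∧
      IsBigOAtInfty (fPX 1 θ) (fun x => |x| ^ (-(2 + θ 2)))) ∧
    ((∀ x : ℝ, fPX 2 θ x = -fPP 0 2 θ x) ∧
      IsBigOAtInfty (fPX 2 θ) (fun x => |x| ^ (-(2 + θ 2)) * Real.log |x|)) ∧
    ((∀ x : ℝ, fPX 3 θ x = -fPP 0 3 θ x) ∧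
      IsBigOAtInfty (fPX 3 θ) (fun x => |x| ^ (-(2 + θ 2)))) := by
  exact density_first_deriv_tail_bounds_general θ hθ.1 hθ.2.1
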